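/- arXiv:2601.17347 — 5 statements merged into one kernel-verified Lean document; each statement's English description precedes it below -/
import Mathlib

section
/- Let 0<α<1 and let f be a Schwartz function on ℝ. Then for every ξ∈ℝ, the spectral fractional derivative admits the Marchaud-type representation D^α f(ξ) = C_α ∫₀^∞ [f(ξ) − f(ξ−y)] / y^{1+α} dy, where C_α = α/Γ(1−α) = −1/Γ(−α); that is, the function ξ ↦ C_α ∫₀^∞ [f(ξ)−f(ξ−y)] y^{−1−α} dy has Fourier transform (ik)^α f̂(k). -/
/-!
Put `G(r) = ∫₀^∞ (1 - e^{-ry}) y^{-1-α} dy` for `Re r ≥ 0`. Everything reduces to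
`G(ik) = (ik)^α Γ(1-α)/α` (`marchaudSymbol_I_mul`). The function `G` is homogeneous of degree `α`
under positive real scaling, so Euler's relation `r G'(r) = α G(r)` holds for `Re r > 0`, where
`G'(r) = ∫₀^∞ e^{-ry} y^{-α} dy`. At `r = 1` this gives `G(1) = Γ(1-α)/α`; on the half-plane it
makes `r^{-α} G(r)` constant; and dominated convergence carries the formula to the imaginary axis.

Given this, Fourier inversion yields
`f(ξ) - f(ξ-y) = (2π)⁻¹ ∫ f̂(k) e^{ikξ} (1 - e^{-iky}) dk`, and Fubini in `(y, k)` produces the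
pointwise identity (`fracDeriv_eq_marchaud`). Since `ξ ↦ f(ξ) - f(ξ-y)` has Fourier transform
`f̂(k) (1 - e^{-iky})`, Fubini in `(ξ, y)` produces the Fourier-side identity (`FT_marchaud`).
Both applications of Fubini rest on the integrability of `min(1, y) y^{-1-α}` on `(0, ∞)`.
-/

open MeasureTheory

noncomputable section

/-- Fourier transform with convention `f̂(k) = ∫ f(ξ) e^{-ikξ} dξ`. -/
def FT (f : ℝ → ℂ) (k : ℝ) : ℂ :=
  ∫ ξ : ℝ, f ξ * Complex.exp (-(Complex.I * (k : ℂ) * (ξ : ℂ)))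

/-- Spectral fractional derivative `D^α f`, defined via Fourier inversion so that
`F[D^α f](k) = (ik)^α f̂(k)` with the principal branch. -/
def fracDeriv (α : ℝ) (f : ℝ → ℂ) (ξ : ℝ) : ℂ :=
  ((2 * Real.pi : ℝ) : ℂ)⁻¹ *
    ∫ k : ℝ, (Complex.I * (k : ℂ)) ^ (α : ℂ) * FT f k * Complex.exp (Complex.I * (k : ℂ) * (ξ : ℂ))

/-- The Marchaud-type operator `C_α ∫₀^∞ (f(ξ) − f(ξ−y)) y^{−1−α} dy` with
`C_α = α/Γ(1−α)`. -/
def marchaud (α : ℝ) (f : ℝ → ℂ) (ξ : ℝ) : ℂ :=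
  ((α / Real.Gamma (1 - α) : ℝ) : ℂ) *
    ∫ y in Set.Ioi (0 : ℝ), (f ξ - f (ξ - y)) / ((y ^ (1 + α) : ℝ) : ℂ)

open Set Filter Topology

/-! ### The symbol of the Marchaud operator -/

/-- The function `min(1, y) y^{-1-α}`, integrable on `(0, ∞)` for `0 < α < 1`: the
common factor of the majorants used for dominated convergence and Fubini. -/
def marchaudWeight (α y : ℝ) : ℝ := min 1 y / y ^ (1 + α)

lemma marchaudWeight_nonneg (α : ℝ) {y : ℝ} (hy : 0 < y) : 0 ≤ marchaudWeight α y := by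
  unfold marchaudWeight
  have : 0 ≤ min 1 y := le_min zero_le_one hy.le
  positivity

lemma integrableOn_marchaudWeight {α : ℝ} (hα0 : 0 < α) (hα1 : α < 1) :
    IntegrableOn (marchaudWeight α) (Ioi 0) := by
  rw [← Ioc_union_Ioi_eq_Ioi (zero_le_one' ℝ)]
  refine IntegrableOn.union ?_ ?_
  · have h : IntegrableOn (fun y : ℝ => y ^ (-α)) (Ioc 0 1) := by
      rw [← intervalIntegrable_iff_integrableOn_Ioc_of_le zero_le_one]
      exact intervalIntegral.intervalIntegrable_rpow' (by linarith)
    refine h.congr_fun (fun y hy => ?_) measurableSet_Ioc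
    have hy0 : 0 < y := hy.1
    simp only [marchaudWeight, min_eq_right hy.2]
    rw [Real.rpow_add hy0, Real.rpow_one, Real.rpow_neg hy0.le]
    field_simp
  · have h := integrableOn_Ioi_rpow_of_lt (a := -(1 + α)) (by linarith) one_pos
    refine h.congr_fun (fun y hy => ?_) measurableSet_Ioi
    have hy1 : 1 < y := hy
    simp only [marchaudWeight, min_eq_left hy1.le]
    rw [Real.rpow_neg (by linarith), one_div]

lemma norm_one_sub_exp_neg_le {z : ℂ} (hz : 0 ≤ z.re) : ‖1 - Complex.exp (-z)‖ ≤ ‖z‖ := by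
  have h := Convex.norm_image_sub_le_of_norm_hasDerivWithin_le (𝕜 := ℂ) (f := Complex.exp)
    (f' := Complex.exp) (s := {w : ℂ | w.re ≤ 0}) (C := 1) (x := -z) (y := 0)
    (fun x _ => (Complex.hasDerivAt_exp x).hasDerivWithinAt)
    (fun x hx => by rw [Complex.norm_exp]; exact Real.exp_le_one_iff.2 hx)
    (convex_halfSpace_re_le 0) (by simpa using hz) (by simp)
  simpa using h

lemma norm_one_sub_exp_neg_mul_le {r : ℂ} (hr : 0 ≤ r.re) {y : ℝ} (hy : 0 < y) :
    ‖1 - Complex.exp (-(r * y))‖ ≤ (2 + ‖r‖) * min 1 y := by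
  have hre : 0 ≤ (r * y).re := by
    rw [Complex.re_mul_ofReal]; positivity
  rcases le_total 1 y with h | h
  · rw [min_eq_left h]
    have h1 : ‖Complex.exp (-(r * y))‖ ≤ 1 := by
      rw [Complex.norm_exp, Real.exp_le_one_iff, Complex.neg_re]; linarith
    have h2 := norm_sub_le (1 : ℂ) (Complex.exp (-(r * y)))
    rw [norm_one] at h2
    linarith [norm_nonneg r]
  · rw [min_eq_right h]
    have h2 := norm_one_sub_exp_neg_le hre
    rw [norm_mul, Complex.norm_real, Real.norm_of_nonneg hy.le] at h2
    nlinarith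

lemma norm_div_weight {y : ℝ} (hy : 0 < y) (α : ℝ) (z : ℂ) :
    ‖z / ((y ^ (1 + α) : ℝ) : ℂ)‖ = ‖z‖ / y ^ (1 + α) := by
  rw [norm_div, Complex.norm_real, Real.norm_of_nonneg (by positivity)]

lemma norm_kernel_le (α : ℝ) {r : ℂ} (hr : 0 ≤ r.re) {y : ℝ} (hy : 0 < y) :
    ‖(1 - Complex.exp (-(r * y))) / ((y ^ (1 + α) : ℝ) : ℂ)‖ ≤
      (2 + ‖r‖) * marchaudWeight α y := by
  rw [norm_div_weight hy, marchaudWeight, ← mul_div_assoc]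
  gcongr
  exact norm_one_sub_exp_neg_mul_le hr hy

/-- The symbol of the Marchaud operator, `r ↦ ∫₀^∞ (1 - e^{-ry}) y^{-1-α} dy`, on `0 ≤ Re r`. -/
def marchaudSymbol (α : ℝ) (r : ℂ) : ℂ :=
  ∫ y in Ioi (0 : ℝ), (1 - Complex.exp (-(r * y))) / ((y ^ (1 + α) : ℝ) : ℂ)

lemma measurable_kernel (α : ℝ) (r : ℂ) :
    Measurable fun y : ℝ => (1 - Complex.exp (-(r * y))) / ((y ^ (1 + α) : ℝ) : ℂ) := by
  fun_prop

lemma integrableOn_kernel {α : ℝ} (hα0 : 0 < α) (hα1 : α < 1) {r : ℂ} (hr : 0 ≤ r.re) :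
    IntegrableOn (fun y : ℝ => (1 - Complex.exp (-(r * y))) / ((y ^ (1 + α) : ℝ) : ℂ))
      (Ioi 0) := by
  refine ((integrableOn_marchaudWeight hα0 hα1).const_mul (2 + ‖r‖)).mono'
    (measurable_kernel α r).aestronglyMeasurable ?_
  filter_upwards [ae_restrict_mem measurableSet_Ioi] with y hy
  exact norm_kernel_le α hr hy

/-- Differentiation under the integral sign in the open half-plane; the derivative is a
Gamma-type integral. -/
lemma hasDerivAt_marchaudSymbol {α : ℝ} (hα0 : 0 < α) (hα1 : α < 1) {r : ℂ} (hr : 0 < r.re) :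
    HasDerivAt (marchaudSymbol α)
      (∫ y in Ioi (0 : ℝ), y * Complex.exp (-(r * y)) / ((y ^ (1 + α) : ℝ) : ℂ)) r := by
  have hs : {z : ℂ | r.re / 2 < z.re} ∈ 𝓝 r :=
    (isOpen_lt continuous_const Complex.continuous_re).mem_nhds (by simp [hr])
  have hb := integrableOn_rpow_mul_exp_neg_mul_rpow (p := 1) (s := -α) (b := r.re / 2)
    (by linarith) one_pos (by linarith)
  refine (hasDerivAt_integral_of_dominated_loc_of_deriv_le (𝕜 := ℂ)
    (F := fun z (y : ℝ) => (1 - Complex.exp (-(z * y))) / ((y ^ (1 + α) : ℝ) : ℂ))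
    (F' := fun z (y : ℝ) => y * Complex.exp (-(z * y)) / ((y ^ (1 + α) : ℝ) : ℂ))
    hs (Eventually.of_forall fun z => (measurable_kernel α z).aestronglyMeasurable)
    (integrableOn_kernel hα0 hα1 hr.le)
    (Measurable.aestronglyMeasurable (by fun_prop)) ?_ hb ?_).2
  · filter_upwards [ae_restrict_mem measurableSet_Ioi] with y hy z hz
    have hy0 : 0 < y := hy
    rw [norm_div_weight hy0, norm_mul, Complex.norm_real, Real.norm_of_nonneg hy0.le,
      Complex.norm_exp, Real.rpow_add hy0, Real.rpow_one, Real.rpow_neg hy0.le,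
      Complex.neg_re, Complex.re_mul_ofReal]
    have h1 : Real.exp (-(z.re * y)) ≤ Real.exp (-(r.re / 2) * y) := by
      apply Real.exp_le_exp.2
      have hz' : r.re / 2 < z.re := hz
      nlinarith
    calc y * Real.exp (-(z.re * y)) / (y * y ^ α) = (y ^ α)⁻¹ * Real.exp (-(z.re * y)) := by
          field_simp
      _ ≤ _ := by gcongr
  · filter_upwards with y z _
    have h1 : HasDerivAt (fun z : ℂ => -(z * y)) (-(1 * y)) z :=
      ((hasDerivAt_id z).mul_const (y : ℂ)).neg
    have h2 := ((h1.cexp).const_sub 1).div_const (((y ^ (1 + α) : ℝ) : ℂ))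
    refine h2.congr_deriv ?_
    ring

lemma marchaudSymbol_smul (α : ℝ) {c : ℝ} (hc : 0 < c) (r : ℂ) :
    marchaudSymbol α (c * r) = ((c ^ α : ℝ) : ℂ) * marchaudSymbol α r := by
  have h := integral_comp_mul_left_Ioi
    (fun y : ℝ => (1 - Complex.exp (-(r * y))) / ((y ^ (1 + α) : ℝ) : ℂ)) 0 hc
  rw [mul_zero] at h
  have h2 : marchaudSymbol α (c * r) = ((c ^ (1 + α) : ℝ) : ℂ) *
      ∫ y in Ioi (0 : ℝ), (1 - Complex.exp (-(r * (c * y : ℝ)))) /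
        (((c * y) ^ (1 + α) : ℝ) : ℂ) := by
    rw [marchaudSymbol, ← integral_const_mul]
    refine setIntegral_congr_fun measurableSet_Ioi fun y hy => ?_
    have hy0 : 0 < y := hy
    have e1 : ((c ^ (1 + α) : ℝ) : ℂ) ≠ 0 := by
      rw [Complex.ofReal_ne_zero]; positivity
    have e2 : ((y ^ (1 + α) : ℝ) : ℂ) ≠ 0 := by
      rw [Complex.ofReal_ne_zero]; positivity
    have e3 : (c : ℂ) * r * y = r * (c * y : ℝ) := by push_cast; ring
    simp only [Real.mul_rpow hc.le hy0.le, e3]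
    rw [Complex.ofReal_mul (c ^ (1 + α))]
    field_simp
  rw [h2, h, ← marchaudSymbol, Real.rpow_add hc, Real.rpow_one, Complex.real_smul]
  have : (c : ℂ) ≠ 0 := by exact_mod_cast hc.ne'
  push_cast
  field_simp

/-- Euler's relation for the homogeneous function `marchaudSymbol α` of degree `α`. -/
lemma euler_marchaudSymbol {α : ℝ} {r d : ℂ} (hd : HasDerivAt (marchaudSymbol α) d r) :
    d * r = α * marchaudSymbol α r := by
  have h1 : HasDerivAt (fun c : ℝ => marchaudSymbol α ((c : ℂ) * r)) (d * (1 * r)) 1 := by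
    have hl : HasDerivAt (fun c : ℂ => c * r) (1 * r) ((1 : ℝ) : ℂ) :=
      (hasDerivAt_id _).mul_const r
    have hd' : HasDerivAt (marchaudSymbol α) d (((1 : ℝ) : ℂ) * r) := by simpa using hd
    exact (hd'.comp (h := fun c : ℂ => c * r) _ hl).comp_ofReal
  have h2 : HasDerivAt (fun c : ℝ => ((c ^ α : ℝ) : ℂ) * marchaudSymbol α r)
      (((α * 1 ^ (α - 1) : ℝ) : ℂ) * marchaudSymbol α r) 1 :=
    ((Real.hasDerivAt_rpow_const (Or.inl one_ne_zero)).ofReal_comp).mul_const _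
  have h3 := h1.unique (h2.congr_of_eventuallyEq ?_)
  · simpa using h3
  · filter_upwards [lt_mem_nhds (zero_lt_one' ℝ)] with c hc
    exact marchaudSymbol_smul α hc r

lemma marchaudSymbol_one {α : ℝ} (hα0 : 0 < α) (hα1 : α < 1) :
    marchaudSymbol α 1 = ((Real.Gamma (1 - α) / α : ℝ) : ℂ) := by
  have h := euler_marchaudSymbol (hasDerivAt_marchaudSymbol hα0 hα1 (r := 1) (by simp))
  have h2 : (∫ y in Ioi (0 : ℝ), y * Complex.exp (-(1 * y)) / ((y ^ (1 + α) : ℝ) : ℂ)) =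
      ((Real.Gamma (1 - α) : ℝ) : ℂ) := by
    rw [Real.Gamma_eq_integral (by linarith), ← integral_complex_ofReal]
    refine setIntegral_congr_fun measurableSet_Ioi fun y hy => ?_
    have hy0 : 0 < y := hy
    have e : (1 - α - 1) = -α := by ring
    simp only [e]
    have e2 : Real.exp (-y) * y ^ (-α) = y * Real.exp (-y) / y ^ (1 + α) := by
      rw [Real.rpow_add hy0, Real.rpow_one, Real.rpow_neg hy0.le]
      field_simp
    rw [e2]
    push_cast
    simp
  rw [h2, mul_one] at h
  have : (α : ℂ) ≠ 0 := by exact_mod_cast hα0.ne'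
  push_cast
  rw [h]
  field_simp

/-- In the open half-plane Euler's relation makes `r^{-α} · marchaudSymbol α r` locally
constant. -/
lemma marchaudSymbol_of_re_pos {α : ℝ} (hα0 : 0 < α) (hα1 : α < 1) {r : ℂ} (hr : 0 < r.re) :
    marchaudSymbol α r = r ^ (α : ℂ) * ((Real.Gamma (1 - α) / α : ℝ) : ℂ) := by
  have hder : ∀ z ∈ {z : ℂ | 0 < z.re},
      HasDerivAt (fun z => z ^ (-α : ℂ) * marchaudSymbol α z) 0 z := by
    intro z hz
    have hz0 : z ≠ 0 := by rintro rfl; simp at hz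
    have h1 := hasDerivAt_marchaudSymbol hα0 hα1 hz
    have h2 := (hasDerivAt_id z).cpow_const (c := (-α : ℂ)) (Or.inl hz)
    have h3 := h2.mul h1
    refine h3.congr_deriv ?_
    have h4 := euler_marchaudSymbol h1
    simp only [id]
    rw [Complex.cpow_sub _ _ hz0, Complex.cpow_one]
    field_simp
    linear_combination (z ^ (-α : ℂ)) * h4
  have hopen : IsOpen {z : ℂ | 0 < z.re} := isOpen_lt continuous_const Complex.continuous_re
  have hconst := hopen.is_const_of_deriv_eq_zero (convex_halfSpace_re_gt 0).isPreconnected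
    (fun z hz => (hder z hz).differentiableAt.differentiableWithinAt)
    (fun z hz => (hder z hz).deriv) hr (show (1 : ℂ) ∈ {z : ℂ | 0 < z.re} by simp)
  have hr0 : r ≠ 0 := by rintro rfl; simp at hr
  simp only [Complex.one_cpow, one_mul, marchaudSymbol_one hα0 hα1] at hconst
  rw [← hconst, Complex.cpow_neg, ← mul_assoc, mul_inv_cancel₀, one_mul]
  simp [Complex.cpow_eq_zero_iff, hr0]

/-- The value on the imaginary axis is the limit from the right half-plane. -/
lemma marchaudSymbol_I_mul {α : ℝ} (hα0 : 0 < α) (hα1 : α < 1) (k : ℝ) :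
    marchaudSymbol α (Complex.I * k) =
      (Complex.I * k) ^ (α : ℂ) * ((Real.Gamma (1 - α) / α : ℝ) : ℂ) := by
  rcases eq_or_ne k 0 with rfl | hk
  · have : (α : ℂ) ≠ 0 := by exact_mod_cast hα0.ne'
    simp [marchaudSymbol, Complex.zero_cpow this]
  have hpath : Tendsto (fun ε : ℝ => (ε : ℂ) + Complex.I * k) (𝓝[>] 0) (𝓝 (Complex.I * k)) := by
    have : Continuous fun ε : ℝ => (ε : ℂ) + Complex.I * k := by fun_prop
    simpa using (this.tendsto 0).mono_left nhdsWithin_le_nhds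
  have hre : ∀ ε : ℝ, ((ε : ℂ) + Complex.I * k).re = ε := by intro ε; simp
  have hL : Tendsto (fun ε : ℝ => marchaudSymbol α ((ε : ℂ) + Complex.I * k)) (𝓝[>] 0)
      (𝓝 (marchaudSymbol α (Complex.I * k))) := by
    refine tendsto_integral_filter_of_dominated_convergence
      (fun y => (2 + (1 + |k|)) * marchaudWeight α y) ?_ ?_ ?_ ?_
    · exact Eventually.of_forall fun ε => (measurable_kernel α _).aestronglyMeasurable
    · filter_upwards [Ioo_mem_nhdsGT (zero_lt_one' ℝ)] with ε hε
      filter_upwards [ae_restrict_mem measurableSet_Ioi] with y hy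
      refine (norm_kernel_le α (by rw [hre]; exact hε.1.le) hy).trans ?_
      have := marchaudWeight_nonneg α hy
      have h2 : ‖(ε : ℂ) + Complex.I * k‖ ≤ 1 + |k| := by
        refine (norm_add_le _ _).trans ?_
        simp only [Complex.norm_real, norm_mul, Complex.norm_I, one_mul, Real.norm_eq_abs]
        rw [abs_of_pos hε.1]
        linarith [hε.2]
      gcongr
    · exact (integrableOn_marchaudWeight hα0 hα1).const_mul _
    · filter_upwards with y
      have : Continuous fun z : ℂ =>
          (1 - Complex.exp (-(z * y))) / ((y ^ (1 + α) : ℝ) : ℂ) := by fun_prop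
      exact (this.tendsto _).comp hpath
  have hR : Tendsto (fun ε : ℝ => ((ε : ℂ) + Complex.I * k) ^ (α : ℂ) *
      ((Real.Gamma (1 - α) / α : ℝ) : ℂ)) (𝓝[>] 0)
      (𝓝 ((Complex.I * k) ^ (α : ℂ) * ((Real.Gamma (1 - α) / α : ℝ) : ℂ))) := by
    refine Tendsto.mul_const _ ?_
    have hc : ContinuousAt (fun z : ℂ => z ^ (α : ℂ)) (Complex.I * k) :=
      continuousAt_id.cpow continuousAt_const (Or.inr (by simpa using hk))
    exact hc.tendsto.comp hpath
  refine tendsto_nhds_unique hL (hR.congr' ?_)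
  filter_upwards [self_mem_nhdsWithin] with ε hε
  exact (marchaudSymbol_of_re_pos hα0 hα1 (by rw [hre]; exact hε)).symm

lemma marchaud_const_mul_cancel {α : ℝ} (hα0 : 0 < α) (hα1 : α < 1) :
    ((α / Real.Gamma (1 - α) : ℝ) : ℂ) * ((Real.Gamma (1 - α) / α : ℝ) : ℂ) = 1 := by
  have hG : Real.Gamma (1 - α) ≠ 0 := (Real.Gamma_pos_of_pos (by linarith)).ne'
  have : α / Real.Gamma (1 - α) * (Real.Gamma (1 - α) / α) = 1 := by field_simp
  rw [← Complex.ofReal_mul, this, Complex.ofReal_one]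

/-! ### Fourier transforms of Schwartz functions -/

open scoped FourierTransform

lemma FT_eq_fourier (f : SchwartzMap ℝ ℂ) (k : ℝ) :
    FT f k = (𝓕 f : SchwartzMap ℝ ℂ) (k / (2 * Real.pi)) := by
  rw [SchwartzMap.fourier_coe, Real.fourier_real_eq_integral_exp_smul, FT]
  congr 1 with ξ
  rw [smul_eq_mul, mul_comm]
  congr 2
  have : (Real.pi : ℂ) ≠ 0 := by exact_mod_cast Real.pi_ne_zero
  push_cast
  field_simp

lemma continuous_FT (f : SchwartzMap ℝ ℂ) : Continuous (FT f) := by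
  have h : FT f = fun k => (𝓕 f : SchwartzMap ℝ ℂ) (k / (2 * Real.pi)) :=
    funext (FT_eq_fourier f)
  rw [h]
  exact (𝓕 f : SchwartzMap ℝ ℂ).continuous.comp (by fun_prop)

lemma integrable_pow_mul_FT (f : SchwartzMap ℝ ℂ) (n : ℕ) :
    Integrable fun k : ℝ => |k| ^ n * ‖FT f k‖ := by
  have h := (((𝓕 f : SchwartzMap ℝ ℂ).integrable_pow_mul volume n).comp_div
    (R := 2 * Real.pi) (by positivity)).const_mul ((2 * Real.pi) ^ n)
  refine h.congr (Eventually.of_forall fun k => ?_)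
  have : |k / (2 * Real.pi)| = |k| / (2 * Real.pi) := by
    rw [abs_div, abs_of_pos (by positivity : 0 < 2 * Real.pi)]
  simp only [FT_eq_fourier, Real.norm_eq_abs, this]
  rw [← mul_assoc, ← mul_pow, mul_div_cancel₀ _ (by positivity)]

lemma integrable_two_add_abs_mul_FT (f : SchwartzMap ℝ ℂ) :
    Integrable fun k : ℝ => (2 + |k|) * ‖FT f k‖ := by
  refine (((integrable_pow_mul_FT f 0).const_mul 2).add (integrable_pow_mul_FT f 1)).congr
    (Eventually.of_forall fun k => ?_)
  simp only [Pi.add_apply]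
  ring

lemma integrable_FT_mul_exp (f : SchwartzMap ℝ ℂ) (ξ : ℝ) :
    Integrable fun k : ℝ => FT f k * Complex.exp (Complex.I * k * ξ) := by
  have hc := continuous_FT f
  refine (integrable_pow_mul_FT f 0).mono' (Continuous.aestronglyMeasurable (by fun_prop))
    (Eventually.of_forall fun k => ?_)
  simp [Complex.norm_exp]

lemma FT_inversion (f : SchwartzMap ℝ ℂ) (ξ : ℝ) :
    f ξ = ((2 * Real.pi : ℝ) : ℂ)⁻¹ * ∫ k : ℝ, FT f k * Complex.exp (Complex.I * k * ξ) := by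
  have h1 : f ξ = 𝓕⁻ (𝓕 f : SchwartzMap ℝ ℂ) ξ := by rw [FourierTransform.fourierInv_fourier_eq]
  rw [h1, SchwartzMap.fourierInv_coe, Real.fourierInv_eq']
  have h2 := Measure.integral_comp_div (fun v : ℝ =>
    Complex.exp (((2 * Real.pi * inner ℝ v ξ : ℝ) : ℂ) * Complex.I) •
      (𝓕 f : SchwartzMap ℝ ℂ) v) (2 * Real.pi)
  rw [abs_of_pos (by positivity : 0 < 2 * Real.pi)] at h2
  have h3 : (∫ k : ℝ, FT f k * Complex.exp (Complex.I * k * ξ)) =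
      (2 * Real.pi) • ∫ v : ℝ, Complex.exp (((2 * Real.pi * inner ℝ v ξ : ℝ) : ℂ) * Complex.I) •
      (𝓕 f : SchwartzMap ℝ ℂ) v := by
    rw [← h2]
    congr 1 with k
    rw [FT_eq_fourier, smul_eq_mul, mul_comm]
    congr 2
    have : (Real.pi : ℂ) ≠ 0 := by exact_mod_cast Real.pi_ne_zero
    simp only [RCLike.inner_apply, conj_trivial]
    push_cast
    field_simp
  rw [h3, Complex.real_smul, inv_mul_cancel_left₀]
  rw [Complex.ofReal_ne_zero]
  positivity

lemma sub_shift_eq_integral (f : SchwartzMap ℝ ℂ) (ξ y : ℝ) :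
    f ξ - f (ξ - y) = ((2 * Real.pi : ℝ) : ℂ)⁻¹ *
      ∫ k : ℝ, FT f k * Complex.exp (Complex.I * k * ξ) *
        (1 - Complex.exp (-(Complex.I * k * y))) := by
  rw [FT_inversion f ξ, FT_inversion f (ξ - y), ← mul_sub,
    ← integral_sub (integrable_FT_mul_exp f ξ) (integrable_FT_mul_exp f (ξ - y))]
  congr 2 with k
  rw [mul_sub, mul_one, mul_assoc _ _ (Complex.exp _), ← Complex.exp_add]
  congr 3
  push_cast
  ring

/-! ### The pointwise representation -/

lemma fracDeriv_eq_marchaud {α : ℝ} (hα0 : 0 < α) (hα1 : α < 1) (f : SchwartzMap ℝ ℂ) (ξ : ℝ) :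
    fracDeriv α f ξ = marchaud α f ξ := by
  have hc := continuous_FT f
  -- Joint integrability for Fubini, from the majorant `marchaudWeight α y * ((2 + |k|) ‖f̂ k‖)`.
  have hint : Integrable (Function.uncurry fun (y k : ℝ) =>
      FT f k * Complex.exp (Complex.I * k * ξ) *
        ((1 - Complex.exp (-(Complex.I * k * y))) / ((y ^ (1 + α) : ℝ) : ℂ)))
      ((volume.restrict (Ioi 0)).prod volume) := by
    refine ((integrableOn_marchaudWeight hα0 hα1).integrable.mul_prod
      (integrable_two_add_abs_mul_FT f)).mono' ?_ ?_
    · have hm := hc.measurable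
      refine Measurable.aestronglyMeasurable ?_
      unfold Function.uncurry
      fun_prop
    · have : ∀ᵐ p : ℝ × ℝ ∂((volume.restrict (Ioi 0)).prod volume), p.1 ∈ Ioi (0 : ℝ) :=
        Measure.quasiMeasurePreserving_fst.ae (ae_restrict_mem measurableSet_Ioi)
      filter_upwards [this] with p hp
      have h1 := norm_kernel_le α (r := Complex.I * p.2) (by simp) hp
      have h2 : ‖Complex.exp (Complex.I * p.2 * ξ)‖ = 1 := by simp [Complex.norm_exp]
      have h3 : ‖Complex.I * (p.2 : ℂ)‖ = |p.2| := by simp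
      rw [h3] at h1
      simp only [Function.uncurry]
      rw [norm_mul, norm_mul, h2, mul_one]
      calc _ ≤ ‖FT f p.2‖ * ((2 + |p.2|) * marchaudWeight α p.1) := by gcongr
        _ = _ := by ring
  have hswap := integral_integral_swap hint
  have hL : (∫ y in Ioi (0 : ℝ), (f ξ - f (ξ - y)) / ((y ^ (1 + α) : ℝ) : ℂ)) =
      ((2 * Real.pi : ℝ) : ℂ)⁻¹ * ∫ y in Ioi (0 : ℝ), ∫ k : ℝ,
        FT f k * Complex.exp (Complex.I * k * ξ) *
        ((1 - Complex.exp (-(Complex.I * k * y))) / ((y ^ (1 + α) : ℝ) : ℂ)) := by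
    rw [← integral_const_mul]
    congr 1 with y
    rw [sub_shift_eq_integral, mul_div_assoc, ← integral_div]
    simp only [mul_div_assoc]
  have hR : ∀ k : ℝ, (∫ y in Ioi (0 : ℝ), FT f k * Complex.exp (Complex.I * k * ξ) *
        ((1 - Complex.exp (-(Complex.I * k * y))) / ((y ^ (1 + α) : ℝ) : ℂ))) =
      ((Real.Gamma (1 - α) / α : ℝ) : ℂ) * ((Complex.I * k) ^ (α : ℂ) * FT f k *
        Complex.exp (Complex.I * k * ξ)) := by
    intro k
    rw [integral_const_mul, ← marchaudSymbol, marchaudSymbol_I_mul hα0 hα1]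
    ring
  have hone := marchaud_const_mul_cancel hα0 hα1
  rw [marchaud, fracDeriv, hL, hswap]
  simp only [hR]
  rw [integral_const_mul]
  linear_combination (-(((2 * Real.pi : ℝ) : ℂ)⁻¹ * ∫ k : ℝ, (Complex.I * (k : ℂ)) ^ (α : ℂ) *
    FT f k * Complex.exp (Complex.I * (k : ℂ) * (ξ : ℂ)))) * hone

/-! ### The Fourier transform of the Marchaud expression -/

/-- Mean value theorem together with the decay of `f'`; for `y ≤ 1` the decay is uniform in the
segment `[ξ - y, ξ]`. -/
lemma exists_norm_sub_shift_le (f : SchwartzMap ℝ ℂ) :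
    ∃ C : ℝ, 0 ≤ C ∧ ∀ ξ y : ℝ, 0 < y → y ≤ 1 →
      ‖f ξ - f (ξ - y)‖ ≤ C * (1 + ξ ^ 2)⁻¹ * y := by
  set g := SchwartzMap.derivCLM ℝ ℂ f with hg
  obtain ⟨C0, hC0, h0⟩ := g.decay 0 0
  obtain ⟨C2, hC2, h2⟩ := g.decay 2 0
  refine ⟨3 * (C0 + C2), by positivity, fun ξ y hy hy1 => ?_⟩
  have hder : ∀ t, HasDerivAt f (g t) t := by
    intro t
    rw [hg, SchwartzMap.derivCLM_apply]
    exact f.differentiableAt.hasDerivAt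
  have hbound : ∀ t ∈ Icc (ξ - y) ξ, ‖g t‖ ≤ 3 * (C0 + C2) * (1 + ξ ^ 2)⁻¹ := by
    intro t ht
    have a0 := h0 t
    have a2 := h2 t
    simp only [pow_zero, one_mul, norm_iteratedFDeriv_zero, Real.norm_eq_abs, sq_abs] at a0 a2
    have a3 : (1 + t ^ 2) * ‖g t‖ ≤ C0 + C2 := by linarith
    have a4 : 1 + ξ ^ 2 ≤ 3 * (1 + t ^ 2) := by
      nlinarith [ht.1, ht.2, sq_nonneg (ξ - 2 * t), mul_nonneg (sub_nonneg.2 ht.2)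
        (by linarith [ht.1] : 0 ≤ 1 - (ξ - t))]
    rw [← div_eq_mul_inv, le_div_iff₀ (by positivity)]
    nlinarith [norm_nonneg (g t)]
  have h := Convex.norm_image_sub_le_of_norm_hasDerivWithin_le
    (fun t _ => (hder t).hasDerivWithinAt) hbound (convex_Icc (ξ - y) ξ)
    (x := ξ - y) (y := ξ) ⟨le_rfl, by linarith⟩ ⟨by linarith, le_rfl⟩
  rwa [sub_sub_cancel, Real.norm_of_nonneg hy.le] at h

lemma FT_shift (f : SchwartzMap ℝ ℂ) (k y : ℝ) :
    (∫ ξ : ℝ, (f ξ - f (ξ - y)) * Complex.exp (-(Complex.I * k * ξ))) =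
      FT f k * (1 - Complex.exp (-(Complex.I * k * y))) := by
  have hf : Integrable fun ξ : ℝ => f ξ * Complex.exp (-(Complex.I * k * ξ)) := by
    refine f.integrable.norm.mono' (Continuous.aestronglyMeasurable ?_) ?_
    · have := f.continuous
      fun_prop
    · exact Eventually.of_forall fun ξ => by simp [Complex.norm_exp]
  have e : ∀ ξ : ℝ, f (ξ - y) * Complex.exp (-(Complex.I * k * ξ)) =
      Complex.exp (-(Complex.I * k * y)) *
        (f (ξ - y) * Complex.exp (-(Complex.I * k * (ξ - y : ℝ)))) := by
    intro ξ
    rw [mul_left_comm, ← Complex.exp_add]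
    congr 2
    push_cast
    ring
  simp only [sub_mul]
  rw [integral_sub hf]
  · simp only [e]
    rw [integral_const_mul, integral_sub_right_eq_self
      (fun ξ : ℝ => f ξ * Complex.exp (-(Complex.I * k * ξ))), ← FT]
    ring
  · simp only [e]
    exact (hf.comp_sub_right y).const_mul _

/-- Joint integrability for Fubini in `(ξ, y)`. The term `‖f (ξ - y)‖` of the majorant is a
convolution integrand. -/
lemma integrable_marchaud_FT_integrand {α : ℝ} (hα0 : 0 < α) (hα1 : α < 1)
    (f : SchwartzMap ℝ ℂ) (k : ℝ) :
    Integrable (Function.uncurry fun (ξ y : ℝ) =>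
      (f ξ - f (ξ - y)) / ((y ^ (1 + α) : ℝ) : ℂ) * Complex.exp (-(Complex.I * k * ξ)))
      (volume.prod (volume.restrict (Ioi 0))) := by
  obtain ⟨C, hC, hfC⟩ := exists_norm_sub_shift_le f
  have hw : Integrable (marchaudWeight α) (volume.restrict (Ioi 0)) :=
    integrableOn_marchaudWeight hα0 hα1
  have i1 := (integrable_inv_one_add_sq.const_mul C).mul_prod hw
  have i2 := f.integrable.norm.mul_prod (μ := volume) hw
  have i3 := hw.convolution_integrand (ContinuousLinearMap.mul ℝ ℝ) (f.integrable (μ := volume)).norm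
  refine ((i1.add i2).add i3).mono' ?_ ?_
  · have hm := f.continuous.measurable
    refine Measurable.aestronglyMeasurable ?_
    unfold Function.uncurry
    fun_prop
  · have : ∀ᵐ p : ℝ × ℝ ∂(volume.prod (volume.restrict (Ioi 0))), p.2 ∈ Ioi (0 : ℝ) :=
      Measure.quasiMeasurePreserving_snd.ae (ae_restrict_mem measurableSet_Ioi)
    filter_upwards [this] with p hp
    obtain ⟨ξ, y⟩ := p
    have hy : 0 < y := hp
    have h2 : ‖Complex.exp (-(Complex.I * k * ξ))‖ = 1 := by simp [Complex.norm_exp]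
    simp only [Function.uncurry, Pi.add_apply, ContinuousLinearMap.mul_apply']
    rw [norm_mul, h2, mul_one, norm_div_weight hy]
    have hmain : ‖f ξ - f (ξ - y)‖ ≤
        (C * (1 + ξ ^ 2)⁻¹ + ‖f ξ‖ + ‖f (ξ - y)‖) * min 1 y := by
      rcases le_total 1 y with h | h
      · rw [min_eq_left h]
        have := norm_sub_le (f ξ) (f (ξ - y))
        have : 0 ≤ C * (1 + ξ ^ 2)⁻¹ := by positivity
        linarith
      · rw [min_eq_right h]
        have := hfC ξ y hy h
        have : 0 ≤ (‖f ξ‖ + ‖f (ξ - y)‖) * y := by positivity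
        linarith
    calc _ ≤ (C * (1 + ξ ^ 2)⁻¹ + ‖f ξ‖ + ‖f (ξ - y)‖) * min 1 y / y ^ (1 + α) := by gcongr
      _ = _ := by rw [marchaudWeight]; ring

lemma FT_marchaud {α : ℝ} (hα0 : 0 < α) (hα1 : α < 1) (f : SchwartzMap ℝ ℂ) (k : ℝ) :
    FT (marchaud α f) k = (Complex.I * (k : ℂ)) ^ (α : ℂ) * FT f k := by
  have hswap := integral_integral_swap (integrable_marchaud_FT_integrand hα0 hα1 f k)
  have hL : FT (marchaud α f) k = ((α / Real.Gamma (1 - α) : ℝ) : ℂ) *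
      ∫ ξ : ℝ, ∫ y in Ioi (0 : ℝ), (f ξ - f (ξ - y)) / ((y ^ (1 + α) : ℝ) : ℂ) *
        Complex.exp (-(Complex.I * k * ξ)) := by
    rw [FT, ← integral_const_mul]
    congr 1 with ξ
    rw [marchaud, integral_mul_const, mul_assoc]
  have hR : ∀ y : ℝ, (∫ ξ : ℝ, (f ξ - f (ξ - y)) / ((y ^ (1 + α) : ℝ) : ℂ) *
        Complex.exp (-(Complex.I * k * ξ))) =
      FT f k * ((1 - Complex.exp (-(Complex.I * k * y))) / ((y ^ (1 + α) : ℝ) : ℂ)) := by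
    intro y
    rw [← mul_div_assoc, ← FT_shift, ← integral_div]
    congr 1 with ξ
    ring
  have hone := marchaud_const_mul_cancel hα0 hα1
  rw [hL, hswap]
  simp only [hR]
  rw [integral_const_mul, ← marchaudSymbol, marchaudSymbol_I_mul hα0 hα1]
  linear_combination ((Complex.I * (k : ℂ)) ^ (α : ℂ) * FT f k) * hone

/-- for `0 < α < 1` and Schwartz `f`, the spectral fractional derivative has the
Marchaud representation `D^α f(ξ) = C_α ∫₀^∞ (f(ξ)−f(ξ−y)) y^{−1−α} dy` with
`C_α = α/Γ(1−α) = −1/Γ(−α)`; that is, this Marchaud expression has Fourier transform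
`(ik)^α f̂(k)`. -/
theorem stmt2 (α : ℝ) (hα0 : 0 < α) (hα1 : α < 1) (f : SchwartzMap ℝ ℂ) :
    (α / Real.Gamma (1 - α)) = -1 / Real.Gamma (-α) ∧
    (∀ ξ : ℝ, fracDeriv α (⇑f) ξ = marchaud α (⇑f) ξ) ∧
    (∀ k : ℝ, FT (marchaud α (⇑f)) k = (Complex.I * (k : ℂ)) ^ (α : ℂ) * FT (⇑f) k) := by
  refine ⟨?_, fracDeriv_eq_marchaud hα0 hα1 f, FT_marchaud hα0 hα1 f⟩
  have h := Real.Gamma_add_one (s := -α) (by linarith)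
  have hG : Real.Gamma (1 - α) ≠ 0 := (Real.Gamma_pos_of_pos (by linarith)).ne'
  have e : -α + 1 = 1 - α := by ring
  rw [e] at h
  have hG' : Real.Gamma (-α) ≠ 0 := by
    intro h0
    rw [h0, mul_zero] at h
    exact hG h
  rw [h]
  field_simp
end
end

section
/- Let 0<α≤1 and s>1/2. There is a constant C=C(s,α) such that for all f,g ∈ H^s(ℝ), the function D^α f·g = (D^α f)g − f(D^α g) belongs to H^{s−α}(ℝ) and ‖D^α f·g‖_{H^{s−α}} ≤ C ‖f‖_{H^s} ‖g‖_{H^s}. -/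
/-!
On the Fourier side the claim is a weighted `L²` bound for a bilinear integral. Let
`⟨k⟩ = √(1 + k²)`, `f = ⟨·⟩^s |F|` and `g = ⟨·⟩^s |G|`. The two multipliers are bounded by `⟨m⟩^α`
and `⟨k - m⟩^α`, so `⟨k⟩^{s-α} |F[D^α f·g](k)|` is at most the integral over `m` of
`K(k, m) f(m) g(k - m)`, where
`K(k, m) = ⟨k⟩^{s-α} (⟨m⟩^α + ⟨k - m⟩^α) ⟨m⟩^{-s} ⟨k - m⟩^{-s}`.

Since each of `⟨k⟩, ⟨m⟩, ⟨k - m⟩` is at most the sum of the other two, and since `0 ≤ α ≤ 2 s`, the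
kernel satisfies `K ≤ 2^{s+1} (⟨k⟩^{-s} + ⟨m⟩^{-s} + ⟨k - m⟩^{-s})` (`kernel_le`,
`symbol_weight_le`). For `s > 1/2` the function `⟨·⟩^{-s}` is square integrable, and each of the
three terms is controlled by Cauchy-Schwarz in `m` followed by Tonelli
(`lintegral_sq_conv_three_le`). This also covers negative `s - α`, where the term with `⟨k⟩^{-s}` is
the one that is needed.
-/


open MeasureTheory

noncomputable section

/-- Squared `H^s` norm, expressed on the Fourier side:
`‖f‖²_{H^s} = (1/2π) ∫ (1+|k|²)^s |f̂(k)|² dk`, where `F = f̂`. -/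
def hsNormSq (s : ℝ) (F : ℝ → ℂ) : ℝ :=
  (2 * Real.pi)⁻¹ * ∫ k : ℝ, (1 + k ^ 2) ^ s * ‖F k‖ ^ 2

/-- Membership of a function in `H^s(ℝ)`, expressed through its Fourier transform `F = f̂`:
`F` is (a.e. strongly) measurable and `(1+|k|²)^s |F(k)|²` is integrable. -/
def MemHsFT (s : ℝ) (F : ℝ → ℂ) : Prop :=
  AEStronglyMeasurable F volume ∧
    Integrable (fun k : ℝ => (1 + k ^ 2) ^ s * ‖F k‖ ^ 2) volume

/-- Fourier transform of the bilinear expression `D^α f·g = (D^α f) g − f (D^α g)`,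
computed from the Fourier transforms `F = f̂`, `G = ĝ`: since products become convolutions,
`F[D^α f·g](k) = (1/2π) ∫ ((im)^α − (i(k−m))^α) F(m) G(k−m) dm`
(principal branch powers). -/
def hirotaSymbolFT (α : ℝ) (F G : ℝ → ℂ) (k : ℝ) : ℂ :=
  ((2 * Real.pi : ℝ) : ℂ)⁻¹ *
    ∫ m : ℝ, ((Complex.I * (m : ℂ)) ^ (α : ℂ) - (Complex.I * ((k - m : ℝ) : ℂ)) ^ (α : ℂ)) *
      F m * G (k - m)

/-- The Japanese bracket `⟨k⟩ = √(1 + k²)`. -/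
def bracket (k : ℝ) : ℝ := Real.sqrt (1 + k ^ 2)

lemma one_le_bracket (k : ℝ) : 1 ≤ bracket k := by
  rw [bracket, Real.one_le_sqrt]
  nlinarith [sq_nonneg k]

lemma bracket_pos (k : ℝ) : 0 < bracket k := lt_of_lt_of_le one_pos (one_le_bracket k)

lemma abs_le_bracket (k : ℝ) : |k| ≤ bracket k := by
  rw [bracket]
  apply Real.le_sqrt_of_sq_le
  rw [sq_abs]
  linarith

lemma bracket_add_le (a b : ℝ) : bracket (a + b) ≤ bracket a + bracket b := by
  have ha := bracket_pos a
  have hb := bracket_pos b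
  have ha2 : bracket a ^ 2 = 1 + a ^ 2 := Real.sq_sqrt (by positivity)
  have hb2 : bracket b ^ 2 = 1 + b ^ 2 := Real.sq_sqrt (by positivity)
  have hab : a * b ≤ bracket a * bracket b := by
    calc a * b ≤ |a * b| := le_abs_self _
      _ = |a| * |b| := abs_mul a b
      _ ≤ _ := mul_le_mul (abs_le_bracket a) (abs_le_bracket b) (abs_nonneg _) ha.le
  conv_lhs => rw [bracket]
  apply Real.sqrt_le_iff.2 ⟨by positivity, ?_⟩
  nlinarith

lemma bracket_neg (a : ℝ) : bracket (-a) = bracket a := by simp [bracket]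

lemma bracket_rpow_sq (k s : ℝ) : (bracket k ^ s) ^ 2 = (1 + k ^ 2) ^ s := by
  rw [bracket, Real.sqrt_eq_rpow, ← Real.rpow_natCast, ← Real.rpow_mul (by positivity),
    ← Real.rpow_mul (by positivity)]
  congr 1
  push_cast
  ring

@[fun_prop]
lemma measurable_bracket : Measurable bracket := by
  unfold bracket
  fun_prop

/-- The kernel bound, for abstract numbers `a, b, c` in the role of `⟨k⟩, ⟨m⟩, ⟨k - m⟩`: the largest
of the three is at most twice the second largest. -/
lemma kernel_le {a b c s α : ℝ} (ha : 1 ≤ a) (hb : 1 ≤ b) (hc : 1 ≤ c) (hac : a ≤ b + c)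
    (hbc : b ≤ a + c) (hα : 0 ≤ α) (hαs : α ≤ 2 * s) :
    a ^ (s - α) * b ^ (α - s) * c ^ (-s) ≤ 2 ^ s * (a ^ (-s) + b ^ (-s) + c ^ (-s)) := by
  have ha0 : 0 < a := by linarith
  have hb0 : 0 < b := by linarith
  have hc0 : 0 < c := by linarith
  have pa : 0 ≤ a ^ (-s) := by positivity
  have pb : 0 ≤ b ^ (-s) := by positivity
  have pc : 0 ≤ c ^ (-s) := by positivity
  have p2 : (0 : ℝ) < 2 ^ s := by positivity
  rcases le_total α s with h | h
  · have h2 : (2 : ℝ) ^ (s - α) ≤ 2 ^ s :=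
      Real.rpow_le_rpow_of_exponent_le (by norm_num) (by linarith)
    rcases le_total c b with hcb | hcb
    · have h1 : a ^ (s - α) ≤ 2 ^ (s - α) * b ^ (s - α) := by
        rw [← Real.mul_rpow (by norm_num) hb0.le]
        exact Real.rpow_le_rpow ha0.le (by linarith) (by linarith)
      calc a ^ (s - α) * b ^ (α - s) * c ^ (-s)
          ≤ (2 ^ (s - α) * b ^ (s - α)) * b ^ (α - s) * c ^ (-s) := by gcongr
        _ = 2 ^ (s - α) * c ^ (-s) := by
            rw [mul_assoc (2 ^ (s - α)), ← Real.rpow_add hb0]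
            simp
        _ ≤ 2 ^ s * c ^ (-s) := by gcongr
        _ ≤ _ := by gcongr; linarith
    · have h1 : a ^ (s - α) ≤ 2 ^ (s - α) * c ^ (s - α) := by
        rw [← Real.mul_rpow (by norm_num) hc0.le]
        exact Real.rpow_le_rpow ha0.le (by linarith) (by linarith)
      calc a ^ (s - α) * b ^ (α - s) * c ^ (-s)
          ≤ (2 ^ (s - α) * c ^ (s - α)) * b ^ (α - s) * c ^ (-s) := by gcongr
        _ = 2 ^ (s - α) * (c ^ (-α) * b ^ (α - s)) := by
            rw [show -α = (s - α) + -s by ring, Real.rpow_add hc0]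
            ring
        _ ≤ 2 ^ (s - α) * (b ^ (-α) * b ^ (α - s)) := by
            have := Real.rpow_le_rpow_of_nonpos hb0 hcb (neg_nonpos.2 hα)
            gcongr
        _ = 2 ^ (s - α) * b ^ (-s) := by
            rw [← Real.rpow_add hb0]
            ring_nf
        _ ≤ 2 ^ s * b ^ (-s) := by gcongr
        _ ≤ _ := by gcongr; linarith
  · have h2 : (2 : ℝ) ^ (α - s) ≤ 2 ^ s :=
      Real.rpow_le_rpow_of_exponent_le (by norm_num) (by linarith)
    rcases le_total c a with hca | hca
    · have h1 : b ^ (α - s) ≤ 2 ^ (α - s) * a ^ (α - s) := by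
        rw [← Real.mul_rpow (by norm_num) ha0.le]
        exact Real.rpow_le_rpow hb0.le (by linarith) (by linarith)
      calc a ^ (s - α) * b ^ (α - s) * c ^ (-s)
          ≤ a ^ (s - α) * (2 ^ (α - s) * a ^ (α - s)) * c ^ (-s) := by gcongr
        _ = 2 ^ (α - s) * (a ^ (s - α) * a ^ (α - s)) * c ^ (-s) := by ring
        _ = 2 ^ (α - s) * c ^ (-s) := by
            rw [← Real.rpow_add ha0]
            simp
        _ ≤ 2 ^ s * c ^ (-s) := by gcongr
        _ ≤ _ := by gcongr; linarith
    · have h1 : b ^ (α - s) ≤ 2 ^ (α - s) * c ^ (α - s) := by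
        rw [← Real.mul_rpow (by norm_num) hc0.le]
        exact Real.rpow_le_rpow hb0.le (by linarith) (by linarith)
      calc a ^ (s - α) * b ^ (α - s) * c ^ (-s)
          ≤ a ^ (s - α) * (2 ^ (α - s) * c ^ (α - s)) * c ^ (-s) := by gcongr
        _ = 2 ^ (α - s) * (c ^ (α - 2 * s) * a ^ (s - α)) := by
            rw [show α - 2 * s = (α - s) + -s by ring, Real.rpow_add hc0]
            ring
        _ ≤ 2 ^ (α - s) * (a ^ (α - 2 * s) * a ^ (s - α)) := by
            have : c ^ (α - 2 * s) ≤ a ^ (α - 2 * s) :=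
              Real.rpow_le_rpow_of_nonpos ha0 hca (by linarith)
            gcongr
        _ = 2 ^ (α - s) * a ^ (-s) := by
            rw [← Real.rpow_add ha0]
            ring_nf
        _ ≤ 2 ^ s * a ^ (-s) := by gcongr
        _ ≤ _ := by gcongr; linarith

/-- `⟨k⟩^{s-α}` times the symbol of the bilinear operator, distributed over the weights
`⟨m⟩^s` and `⟨k - m⟩^s` of the two factors. -/
lemma symbol_weight_le {s α : ℝ} (hα : 0 ≤ α) (hαs : α ≤ 2 * s) (k m : ℝ) :
    bracket k ^ (s - α) *
      ‖(Complex.I * (m : ℂ)) ^ (α : ℂ) - (Complex.I * ((k - m : ℝ) : ℂ)) ^ (α : ℂ)‖ ≤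
    2 ^ (s + 1) * (bracket k ^ (-s) + bracket m ^ (-s) + bracket (k - m) ^ (-s)) *
      (bracket m ^ s * bracket (k - m) ^ s) := by
  have ha := bracket_pos k
  have hb := bracket_pos m
  have hc := bracket_pos (k - m)
  have t1 : bracket k ≤ bracket m + bracket (k - m) := by
    simpa using bracket_add_le m (k - m)
  have t2 : bracket m ≤ bracket k + bracket (k - m) := by
    have := bracket_add_le k (-(k - m))
    rw [bracket_neg] at this
    simpa using this
  have t3 : bracket (k - m) ≤ bracket k + bracket m := by
    have := bracket_add_le k (-m)
    rw [bracket_neg] at this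
    simpa [sub_eq_add_neg] using this
  have hpow (x : ℝ) : ‖(Complex.I * (x : ℂ)) ^ (α : ℂ)‖ ≤ bracket x ^ α := by
    rw [Complex.norm_cpow_real]
    refine Real.rpow_le_rpow (norm_nonneg _) ?_ hα
    simpa using abs_le_bracket x
  have hnorm := (norm_sub_le _ _).trans (add_le_add (hpow m) (hpow (k - m)))
  have k1 := kernel_le (one_le_bracket k) (one_le_bracket m) (one_le_bracket (k - m)) t1 t2 hα hαs
  have k2 := kernel_le (one_le_bracket k) (one_le_bracket (k - m)) (one_le_bracket m)
    (by linarith) t3 hα hαs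
  set a := bracket k
  set b := bracket m
  set c := bracket (k - m)
  have e1 (x : ℝ) (hx : 0 < x) : x ^ (α - s) * x ^ s = x ^ α := by
    rw [← Real.rpow_add hx]; simp
  have e2 (x : ℝ) (hx : 0 < x) : x ^ (-s) * x ^ s = 1 := by
    rw [← Real.rpow_add hx]; simp
  calc a ^ (s - α) * _ ≤ a ^ (s - α) * (b ^ α + c ^ α) := by gcongr
    _ = (a ^ (s - α) * b ^ (α - s) * c ^ (-s) + a ^ (s - α) * c ^ (α - s) * b ^ (-s)) *
          (b ^ s * c ^ s) := by
        linear_combination (-a ^ (s - α)) * ((e1 b hb) * (c ^ (-s) * c ^ s) + b ^ α * (e2 c hc) +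
          (e1 c hc) * (b ^ (-s) * b ^ s) + c ^ α * (e2 b hb))
    _ ≤ (2 ^ s * (a ^ (-s) + b ^ (-s) + c ^ (-s)) + 2 ^ s * (a ^ (-s) + c ^ (-s) + b ^ (-s))) *
          (b ^ s * c ^ s) := by gcongr
    _ = _ := by
        rw [Real.rpow_add_one (by norm_num)]
        ring

open scoped ENNReal

lemma lintegral_mul_sq_le {u v : ℝ → ℝ≥0∞} (hu : Measurable u) (hv : Measurable v) :
    (∫⁻ x, u x * v x) ^ 2 ≤ (∫⁻ x, u x ^ 2) * ∫⁻ x, v x ^ 2 := by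
  have h := ENNReal.lintegral_mul_le_Lp_mul_Lq volume Real.HolderConjugate.two_two
    hu.aemeasurable hv.aemeasurable
  have e (z : ℝ≥0∞) : (z ^ (1 / 2 : ℝ)) ^ 2 = z := by
    rw [← ENNReal.rpow_natCast, ← ENNReal.rpow_mul]
    norm_num
  simp only [Pi.mul_apply, ENNReal.rpow_two] at h
  calc (∫⁻ x, u x * v x) ^ 2 ≤ _ := pow_le_pow_left' h 2
    _ = _ := by rw [mul_pow, e, e]

lemma lintegral_const_sub (g : ℝ → ℝ≥0∞) (k : ℝ) : ∫⁻ m, g (k - m) = ∫⁻ m, g m :=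
  lintegral_sub_left_eq_self g k

lemma lintegral_lintegral_conv {f g : ℝ → ℝ≥0∞} (hf : Measurable f) (hg : Measurable g) :
    ∫⁻ k, ∫⁻ m, f m * g (k - m) = (∫⁻ m, f m) * ∫⁻ m, g m := by
  rw [lintegral_lintegral_swap (by fun_prop)]
  rw [← lintegral_mul_const _ hf]
  refine lintegral_congr fun m => ?_
  rw [lintegral_const_mul _ (by fun_prop), lintegral_sub_right_eq_self g]

lemma add_three_sq_le (x y z : ℝ≥0∞) : (x + y + z) ^ 2 ≤ 3 * (x ^ 2 + y ^ 2 + z ^ 2) := by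
  rcases eq_or_ne x ∞ with rfl | hx
  · simp
  rcases eq_or_ne y ∞ with rfl | hy
  · simp
  rcases eq_or_ne z ∞ with rfl | hz
  · simp
  lift x to NNReal using hx
  lift y to NNReal using hy
  lift z to NNReal using hz
  norm_cast
  rw [← NNReal.coe_le_coe]
  push_cast
  nlinarith [sq_nonneg ((x : ℝ) - y), sq_nonneg ((y : ℝ) - z), sq_nonneg ((x : ℝ) - z)]

/-- Convolution-type bound for the three pieces of the kernel. When the weight `P` sits on `m` or on
`k - m`, Cauchy-Schwarz pairs it against `f(m) g(k - m)`; when it sits on `k`, Cauchy-Schwarz pairs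
`f` with `g` and `P` is integrated last. -/
lemma lintegral_sq_conv_three_le {P f g : ℝ → ℝ≥0∞} (hP : Measurable P) (hf : Measurable f)
    (hg : Measurable g) :
    ∫⁻ k, (∫⁻ m, (P k + P m + P (k - m)) * (f m * g (k - m))) ^ 2 ≤
      9 * (∫⁻ k, P k ^ 2) * ((∫⁻ k, f k ^ 2) * ∫⁻ k, g k ^ 2) := by
  set A := ∫⁻ k, P k ^ 2 with hA
  set B := (∫⁻ k, f k ^ 2) * ∫⁻ k, g k ^ 2 with hB
  have hpt (k : ℝ) : (∫⁻ m, (P k + P m + P (k - m)) * (f m * g (k - m))) ^ 2 ≤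
      3 * (P k ^ 2 * B + A * (∫⁻ m, f m ^ 2 * g (k - m) ^ 2) +
        A * (∫⁻ m, f m ^ 2 * g (k - m) ^ 2)) := by
    have hsplit : ∫⁻ m, (P k + P m + P (k - m)) * (f m * g (k - m)) =
        P k * (∫⁻ m, f m * g (k - m)) + (∫⁻ m, P m * (f m * g (k - m))) +
          ∫⁻ m, P (k - m) * (f m * g (k - m)) := by
      simp_rw [add_mul]
      rw [lintegral_add_left (by fun_prop), lintegral_add_left (by fun_prop),
        lintegral_const_mul _ (by fun_prop)]
    rw [hsplit]
    refine (add_three_sq_le _ _ _).trans ?_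
    have h1 : (∫⁻ m, f m * g (k - m)) ^ 2 ≤ B := by
      refine (lintegral_mul_sq_le hf (v := fun m => g (k - m)) (by fun_prop)).trans_eq ?_
      rw [hB, lintegral_const_sub (fun m => g m ^ 2) k]
    have h2 : (∫⁻ m, P m * (f m * g (k - m))) ^ 2 ≤ A * ∫⁻ m, f m ^ 2 * g (k - m) ^ 2 := by
      refine (lintegral_mul_sq_le hP (v := fun m => f m * g (k - m)) (by fun_prop)).trans_eq ?_
      simp_rw [mul_pow, hA]
    have h3 : (∫⁻ m, P (k - m) * (f m * g (k - m))) ^ 2 ≤ A * ∫⁻ m, f m ^ 2 * g (k - m) ^ 2 := by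
      refine (lintegral_mul_sq_le (u := fun m => P (k - m)) (v := fun m => f m * g (k - m))
        (by fun_prop) (by fun_prop)).trans_eq ?_
      rw [lintegral_const_sub (fun m => P m ^ 2) k]
      simp_rw [mul_pow, hA]
    rw [mul_pow]
    gcongr
  have hconv := lintegral_lintegral_conv (hf.pow_const 2) (hg.pow_const 2)
  have hm : Measurable fun k => ∫⁻ m, f m ^ 2 * g (k - m) ^ 2 :=
    Measurable.lintegral_prod_right' (f := fun p : ℝ × ℝ => f p.2 ^ 2 * g (p.1 - p.2) ^ 2)
      (by fun_prop)
  refine (lintegral_mono hpt).trans_eq ?_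
  rw [lintegral_const_mul _ (by fun_prop), lintegral_add_left (by fun_prop),
    lintegral_add_left (by fun_prop), lintegral_mul_const _ (by fun_prop),
    lintegral_const_mul _ hm, hconv, ← hA, ← hB]
  ring

/-- The squared weighted `L²` norm `∫ ⟨k⟩^{2s} |F(k)|² dk` with values in `[0, ∞]`. -/
def wNorm (s : ℝ) (F : ℝ → ℂ) : ℝ≥0∞ := ∫⁻ k, ENNReal.ofReal (bracket k ^ s * ‖F k‖) ^ 2

lemma wNorm_eq (s : ℝ) (F : ℝ → ℂ) :
    wNorm s F = ∫⁻ k, ENNReal.ofReal ((1 + k ^ 2) ^ s * ‖F k‖ ^ 2) := by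
  refine lintegral_congr fun k => ?_
  have := bracket_pos k
  rw [← ENNReal.ofReal_pow (by positivity), mul_pow, bracket_rpow_sq]

lemma aestronglyMeasurable_weight {s : ℝ} {F : ℝ → ℂ} (hF : AEStronglyMeasurable F volume) :
    AEStronglyMeasurable (fun k : ℝ => (1 + k ^ 2) ^ s * ‖F k‖ ^ 2) volume := by
  have : Measurable fun k : ℝ => (1 + k ^ 2) ^ s := by fun_prop
  exact this.aestronglyMeasurable.mul (hF.norm.pow 2)

lemma hsNormSq_eq {s : ℝ} {F : ℝ → ℂ} (hF : AEStronglyMeasurable F volume) :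
    hsNormSq s F = (2 * Real.pi)⁻¹ * (wNorm s F).toReal := by
  rw [hsNormSq, wNorm_eq, integral_eq_lintegral_of_nonneg_ae
    (Filter.Eventually.of_forall fun k => by positivity) (aestronglyMeasurable_weight hF)]

lemma memHsFT_iff {s : ℝ} {F : ℝ → ℂ} :
    MemHsFT s F ↔ AEStronglyMeasurable F volume ∧ wNorm s F < ∞ := by
  refine and_congr_right fun hF => ?_
  rw [wNorm_eq, Integrable, and_iff_right (aestronglyMeasurable_weight hF),
    hasFiniteIntegral_iff_ofReal (Filter.Eventually.of_forall fun k => by positivity)]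

lemma lintegral_bracket_lt_top {s : ℝ} (hs : 1 / 2 < s) :
    ∫⁻ k, ENNReal.ofReal (bracket k ^ (-s)) ^ 2 < ∞ := by
  have h : Integrable (fun x : ℝ => ((1 : ℝ) + ‖x‖ ^ 2) ^ (-(2 * s) / 2)) volume :=
    integrable_rpow_neg_one_add_norm_sq (by simp; linarith)
  refine (lintegral_congr fun k => ?_).trans_lt h.lintegral_lt_top
  have := bracket_pos k
  rw [← ENNReal.ofReal_pow (by positivity), bracket_rpow_sq, Real.norm_eq_abs, sq_abs]
  ring_nf

lemma hirotaSymbolFT_congr (α : ℝ) {F F' G G' : ℝ → ℂ} (hF : F =ᵐ[volume] F')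
    (hG : G =ᵐ[volume] G') : hirotaSymbolFT α F G = hirotaSymbolFT α F' G' := by
  funext k
  rw [hirotaSymbolFT, hirotaSymbolFT]
  congr 1
  refine integral_congr_ae ?_
  have hG' := (quasiMeasurePreserving_sub_left_of_right_invariant volume k).ae hG
  filter_upwards [hF, hG'] with m h1 h2
  rw [h1, h2]

lemma wNorm_congr (s : ℝ) {F F' : ℝ → ℂ} (hF : F =ᵐ[volume] F') : wNorm s F = wNorm s F' := by
  refine lintegral_congr_ae ?_
  filter_upwards [hF] with m h1
  rw [h1]

lemma measurable_hirotaSymbolFT (α : ℝ) {F G : ℝ → ℂ} (hF : Measurable F) (hG : Measurable G) :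
    StronglyMeasurable (hirotaSymbolFT α F G) := by
  unfold hirotaSymbolFT
  refine StronglyMeasurable.const_mul ?_ _
  refine StronglyMeasurable.integral_prod_right (f := fun k m : ℝ =>
    ((Complex.I * (m : ℂ)) ^ (α : ℂ) - (Complex.I * ((k - m : ℝ) : ℂ)) ^ (α : ℂ)) *
      F m * G (k - m)) (Measurable.stronglyMeasurable ?_)
  unfold Function.uncurry
  fun_prop

lemma weight_hirotaSymbolFT_le {s α : ℝ} (hα : 0 ≤ α) (hαs : α ≤ 2 * s)
    (F G : ℝ → ℂ) (k : ℝ) :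
    ENNReal.ofReal (bracket k ^ (s - α) * ‖hirotaSymbolFT α F G k‖) ≤
      ENNReal.ofReal (2 ^ (s + 1)) * ∫⁻ m, (ENNReal.ofReal (bracket k ^ (-s)) +
        ENNReal.ofReal (bracket m ^ (-s)) + ENNReal.ofReal (bracket (k - m) ^ (-s))) *
        (ENNReal.ofReal (bracket m ^ s * ‖F m‖) *
          ENNReal.ofReal (bracket (k - m) ^ s * ‖G (k - m)‖)) := by
  have hk := bracket_pos k
  rw [← lintegral_const_mul' _ _ ENNReal.ofReal_ne_top, ENNReal.ofReal_mul (by positivity)]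
  have h2pi : ‖((2 * Real.pi : ℝ) : ℂ)⁻¹‖ ≤ 1 := by
    rw [norm_inv, Complex.norm_real, Real.norm_of_nonneg (by positivity)]
    exact inv_le_one_of_one_le₀ (by nlinarith [Real.pi_gt_three])
  have hH : ENNReal.ofReal ‖hirotaSymbolFT α F G k‖ ≤ ∫⁻ m : ℝ, ENNReal.ofReal
      ‖((Complex.I * (m : ℂ)) ^ (α : ℂ) - (Complex.I * ((k - m : ℝ) : ℂ)) ^ (α : ℂ)) *
        F m * G (k - m)‖ := by
    rw [hirotaSymbolFT, norm_mul]
    refine (ENNReal.ofReal_le_ofReal (mul_le_of_le_one_left (norm_nonneg _) h2pi)).trans ?_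
    simp_rw [ofReal_norm]
    exact enorm_integral_le_lintegral_enorm _
  refine (mul_le_mul_right hH _).trans ?_
  rw [← lintegral_const_mul' _ _ ENNReal.ofReal_ne_top]
  refine lintegral_mono fun m => ?_
  have hm := bracket_pos m
  have hkm := bracket_pos (k - m)
  rw [← ENNReal.ofReal_add (by positivity) (by positivity),
    ← ENNReal.ofReal_add (by positivity) (by positivity), ← ENNReal.ofReal_mul (by positivity),
    ← ENNReal.ofReal_mul (by positivity), ← ENNReal.ofReal_mul (by positivity),
    ← ENNReal.ofReal_mul (by positivity)]
  refine ENNReal.ofReal_le_ofReal ?_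
  rw [norm_mul, norm_mul]
  have := mul_le_mul_of_nonneg_right (symbol_weight_le hα hαs k m)
    (mul_nonneg (norm_nonneg (F m)) (norm_nonneg (G (k - m))))
  linarith

lemma wNorm_hirotaSymbolFT_le {s α : ℝ} (hα : 0 ≤ α) (hαs : α ≤ 2 * s)
    {F G : ℝ → ℂ} (hF : Measurable F) (hG : Measurable G) :
    wNorm (s - α) (hirotaSymbolFT α F G) ≤ ENNReal.ofReal (2 ^ (s + 1)) ^ 2 *
      (9 * (∫⁻ k, ENNReal.ofReal (bracket k ^ (-s)) ^ 2)) * (wNorm s F * wNorm s G) := by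
  have key := lintegral_sq_conv_three_le
    (P := fun k => ENNReal.ofReal (bracket k ^ (-s)))
    (f := fun m => ENNReal.ofReal (bracket m ^ s * ‖F m‖))
    (g := fun m => ENNReal.ofReal (bracket m ^ s * ‖G m‖))
    (by fun_prop) (by fun_prop) (by fun_prop)
  calc wNorm (s - α) (hirotaSymbolFT α F G)
      ≤ ∫⁻ k, _ := lintegral_mono fun k =>
        pow_le_pow_left' (weight_hirotaSymbolFT_le hα hαs F G k) 2
    _ ≤ _ := by
        simp_rw [mul_pow]
        rw [lintegral_const_mul' _ _ (by simp), mul_assoc]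
        exact mul_le_mul_right key _

/-- for `0 < α ≤ 1` and `s > 1/2` there is a constant `C = C(s,α)` such that
for all `f, g ∈ H^s(ℝ)`, the function `D^α f·g` belongs to `H^{s−α}(ℝ)` and
`‖D^α f·g‖_{H^{s−α}} ≤ C ‖f‖_{H^s} ‖g‖_{H^s}`. -/
theorem stmt6 (α s : ℝ) (hα0 : 0 < α) (hα1 : α ≤ 1) (hs : 1 / 2 < s) :
    ∃ C : ℝ, ∀ F G : ℝ → ℂ, MemHsFT s F → MemHsFT s G →
      MemHsFT (s - α) (hirotaSymbolFT α F G) ∧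
      Real.sqrt (hsNormSq (s - α) (hirotaSymbolFT α F G)) ≤
        C * Real.sqrt (hsNormSq s F) * Real.sqrt (hsNormSq s G) := by
  set A : ℝ≥0∞ := ENNReal.ofReal (2 ^ (s + 1)) ^ 2 *
    (9 * (∫⁻ k, ENNReal.ofReal (bracket k ^ (-s)) ^ 2)) with hA
  have hAtop : A < ∞ := ENNReal.mul_lt_top (ENNReal.pow_lt_top ENNReal.ofReal_lt_top)
    (ENNReal.mul_lt_top (by simp) (lintegral_bracket_lt_top hs))
  refine ⟨Real.sqrt (2 * Real.pi * A.toReal), fun F G hF hG => ?_⟩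
  obtain ⟨hFm, hFn⟩ := memHsFT_iff.1 hF
  obtain ⟨hGm, hGn⟩ := memHsFT_iff.1 hG
  have hF' := hFm.stronglyMeasurable_mk.measurable
  have hG' := hGm.stronglyMeasurable_mk.measurable
  have hcongr := hirotaSymbolFT_congr α hFm.ae_eq_mk hGm.ae_eq_mk
  have hHm : AEStronglyMeasurable (hirotaSymbolFT α F G) volume := by
    rw [hcongr]
    exact (measurable_hirotaSymbolFT α hF' hG').aestronglyMeasurable
  have hbound : wNorm (s - α) (hirotaSymbolFT α F G) ≤ A * (wNorm s F * wNorm s G) := by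
    rw [hcongr, wNorm_congr s hFm.ae_eq_mk, wNorm_congr s hGm.ae_eq_mk]
    exact wNorm_hirotaSymbolFT_le hα0.le (by linarith) hF' hG'
  have htop : A * (wNorm s F * wNorm s G) < ∞ :=
    ENNReal.mul_lt_top hAtop (ENNReal.mul_lt_top hFn hGn)
  refine ⟨memHsFT_iff.2 ⟨hHm, hbound.trans_lt htop⟩, ?_⟩
  have hreal := ENNReal.toReal_mono htop.ne hbound
  rw [ENNReal.toReal_mul (a := A), ENNReal.toReal_mul (a := wNorm s F)] at hreal
  rw [hsNormSq_eq hHm, hsNormSq_eq hFm, hsNormSq_eq hGm, ← Real.sqrt_mul (by positivity),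
    ← Real.sqrt_mul (by positivity)]
  refine Real.sqrt_le_sqrt ?_
  refine (mul_le_mul_of_nonneg_left hreal (by positivity)).trans_eq ?_
  field_simp
end
end

section
/- Let s>1/2 and f,g ∈ H^s(ℝ). Then D^α f·g → D f·g in H^{s−1}(ℝ) as α→1⁻, where D f·g = f'g − fg' is the classical first-order Hirota derivative; that is, ‖D^α f·g − (f'g − fg')‖_{H^{s−1}} → 0 as α→1⁻. -/
/-!
Everything happens on the Fourier side. Write `⟨x⟩ = (1 + x²)^{1/2}`. For `0 < α ≤ 1` the symbol
satisfies `|(im)^α| ≤ ⟨m⟩`, so the transform of `D^α f·g` at `k` is bounded, uniformly in `α`, by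
the majorant `∫ (⟨m⟩ + ⟨k-m⟩) |F(m)| |G(k-m)| dm`. If the majorant has finite `H^{s-1}` norm
(`lintegral_weighted_majorant_sq_ne_top`), it is finite for almost every `k`, and two applications
of dominated convergence finish: in `m`, for the pointwise limit `α → 1`, and in `k`, for the norm.

Finiteness of the norm is the product estimate for `s > 1/2`. By `kernel_le`,
with `k = m + n`,
`⟨k⟩^{s-1} ⟨m⟩ ≤ C (⟨k⟩^{-s} + ⟨m⟩^{-s} + ⟨n⟩^{-s}) ⟨m⟩^s ⟨n⟩^s`.
With `w = ⟨·⟩^{-s}`, `a = ⟨·⟩^s |F|` and `b = ⟨·⟩^s |G|`, all in `L²`, the weighted majorant is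
therefore at most a constant times `w · (a * b) + (w a) * b + a * (w b)`. The first term
is in `L²` because `a * b` is bounded, the other two by Young's inequality, since `w a` and `w b`
are in `L¹`.
-/

open MeasureTheory

noncomputable section

/-! ### Cauchy–Schwarz and Young inequalities for lower integrals -/

theorem lintegral_mul_sq_le_s7 {f g : ℝ → ENNReal} (hf : Measurable f) (hg : Measurable g) :
    (∫⁻ x, f x * g x) ^ 2 ≤ (∫⁻ x, f x ^ 2) * ∫⁻ x, g x ^ 2 := by
  have h := ENNReal.lintegral_mul_le_Lp_mul_Lq volume Real.HolderConjugate.two_two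
    hf.aemeasurable hg.aemeasurable
  simp only [Pi.mul_apply, ENNReal.rpow_two] at h
  calc (∫⁻ x, f x * g x) ^ 2
      ≤ ((∫⁻ x, f x ^ 2) ^ (1 / 2 : ℝ) * (∫⁻ x, g x ^ 2) ^ (1 / 2 : ℝ)) ^ 2 := by gcongr
    _ = _ := by
      rw [mul_pow, ← ENNReal.rpow_two, ← ENNReal.rpow_two, ← ENNReal.rpow_mul,
        ← ENNReal.rpow_mul]
      norm_num

theorem conv_sq_le {a b : ℝ → ENNReal} (ha : Measurable a) (hb : Measurable b) (k : ℝ) :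
    (∫⁻ m, a m * b (k - m)) ^ 2 ≤ (∫⁻ x, a x ^ 2) * ∫⁻ x, b x ^ 2 := by
  refine (lintegral_mul_sq_le_s7 ha (hb.comp (measurable_const.sub measurable_id))).trans_eq ?_
  congr 1
  exact lintegral_sub_left_eq_self (fun x => b x ^ 2) k

/-- Young's inequality `L¹ * L² ⊆ L²`, obtained from Cauchy–Schwarz for the measure `u(m) dm`
followed by Tonelli. -/
theorem lintegral_conv_sq_le {u b : ℝ → ENNReal} (hu : Measurable u) (hb : Measurable b) :
    ∫⁻ k, (∫⁻ m, u m * b (k - m)) ^ 2 ≤ (∫⁻ x, u x) ^ 2 * ∫⁻ x, b x ^ 2 := by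
  have hroot : ∀ x, u x ^ (1 / 2 : ℝ) * u x ^ (1 / 2 : ℝ) = u x := fun x => by
    rw [← ENNReal.rpow_add_of_nonneg _ _ (by norm_num) (by norm_num)]; norm_num
  have hpt : ∀ k, (∫⁻ m, u m * b (k - m)) ^ 2
      ≤ (∫⁻ x, u x) * ∫⁻ m, u m * b (k - m) ^ 2 := fun k => by
    have hbk : Measurable fun m => b (k - m) := hb.comp (measurable_const.sub measurable_id)
    have h := lintegral_mul_sq_le_s7 (f := fun m => u m ^ (1 / 2 : ℝ))
      (g := fun m => u m ^ (1 / 2 : ℝ) * b (k - m)) (hu.pow_const _) ((hu.pow_const _).mul hbk)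
    have hsq : ∀ x, (u x ^ (1 / 2 : ℝ)) ^ 2 = u x := fun x => by rw [pow_two, hroot]
    simpa only [← mul_assoc, hroot, mul_pow, hsq] using h
  have hmeas : Measurable (Function.uncurry fun k m : ℝ => u m * b (k - m) ^ 2) :=
    (hu.comp measurable_snd).mul ((hb.comp (measurable_fst.sub measurable_snd)).pow_const _)
  calc ∫⁻ k, (∫⁻ m, u m * b (k - m)) ^ 2
      ≤ ∫⁻ k, (∫⁻ x, u x) * ∫⁻ m, u m * b (k - m) ^ 2 := lintegral_mono hpt
    _ = (∫⁻ x, u x) * ∫⁻ k, ∫⁻ m, u m * b (k - m) ^ 2 :=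
        lintegral_const_mul _ hmeas.lintegral_prod_right
    _ = (∫⁻ x, u x) * ∫⁻ m, ∫⁻ k, u m * b (k - m) ^ 2 := by
        rw [lintegral_lintegral_swap hmeas.aemeasurable]
    _ = (∫⁻ x, u x) * ∫⁻ m, u m * ∫⁻ x, b x ^ 2 := by
        congr 1
        refine lintegral_congr fun m => ?_
        rw [lintegral_const_mul _ (by fun_prop)]
        congr 1
        exact lintegral_sub_right_eq_self (fun x => b x ^ 2) m
    _ = _ := by
        rw [lintegral_mul_const _ hu, pow_two, mul_assoc]

theorem conv_comm (a b : ℝ → ENNReal) (k : ℝ) :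
    ∫⁻ m, a m * b (k - m) = ∫⁻ m, b m * a (k - m) := by
  rw [← lintegral_sub_left_eq_self _ k]
  simp [mul_comm]

theorem add_three_sq_le_s7 (p q r : ENNReal) :
    (p + q + r) ^ 2 ≤ 9 * (p ^ 2 + q ^ 2 + r ^ 2) := by
  have key : ∀ t : ENNReal, p ≤ t → q ≤ t → r ≤ t → (p + q + r) ^ 2 ≤ 9 * t ^ 2 := by
    intro t hp hq hr
    calc (p + q + r) ^ 2 ≤ (t + t + t) ^ 2 := by gcongr
      _ = 9 * t ^ 2 := by ring
  rcases le_total p q with h1 | h1 <;> rcases le_total q r with h2 | h2 <;>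
    rcases le_total p r with h3 | h3
  all_goals first
    | exact (key p le_rfl (by assumption) (by assumption)).trans
        (by gcongr; rw [add_assoc]; exact le_self_add)
    | exact (key q (by assumption) le_rfl (by assumption)).trans
        (by gcongr; rw [add_comm (p ^ 2), add_assoc]; exact le_self_add)
    | exact (key r (by assumption) (by assumption) le_rfl).trans
        (by gcongr; exact le_add_self)
    | exact (key r (h1.trans h2) (by assumption) le_rfl).trans
        (by gcongr; exact le_add_self)
    | exact (key p le_rfl (by assumption) (h2.trans h1)).trans
        (by gcongr; rw [add_assoc]; exact le_self_add)

/-! ### The Japanese bracket and the kernel inequality -/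

/-- The Japanese bracket `⟨x⟩ = (1 + x²)^{1/2}`. -/
def jb (x : ℝ) : ℝ := Real.sqrt (1 + x ^ 2)

theorem jb_pos (x : ℝ) : 0 < jb x := Real.sqrt_pos.2 (by positivity)

theorem jb_sq (x : ℝ) : jb x ^ 2 = 1 + x ^ 2 := Real.sq_sqrt (by positivity)

theorem one_le_jb (x : ℝ) : 1 ≤ jb x := Real.one_le_sqrt.2 (by nlinarith [sq_nonneg x])

theorem abs_le_jb (x : ℝ) : |x| ≤ jb x := Real.abs_le_sqrt (by linarith)

theorem measurable_jb : Measurable jb := by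
  unfold jb; fun_prop

theorem jb_rpow_sq (x s : ℝ) : (jb x ^ s) ^ 2 = (1 + x ^ 2) ^ s := by
  rw [← jb_sq, ← Real.rpow_natCast, ← Real.rpow_natCast, ← Real.rpow_mul (jb_pos x).le,
    ← Real.rpow_mul (jb_pos x).le, mul_comm]

theorem jb_add_le (x y : ℝ) : jb (x + y) ≤ jb x + jb y := by
  have h1 := abs_le_jb x
  have h2 := abs_le_jb y
  have h3 : x * y ≤ jb x * jb y := by
    calc x * y ≤ |x * y| := le_abs_self _
      _ = |x| * |y| := abs_mul x y
      _ ≤ _ := by gcongr; exact (jb_pos x).le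
  refine Real.sqrt_le_iff.2 ⟨by linarith [jb_pos x, jb_pos y], ?_⟩
  nlinarith [jb_sq x, jb_sq y]

/-- For `s > 1/2` the trilinear kernel `⟨k⟩^{s-1} ⟨m⟩ ⟨m⟩^{-s} ⟨n⟩^{-s}`, `k = m + n`, is dominated
by a sum of `-s`-th powers of single brackets. For `s ≥ 1` the factor `⟨k⟩^{s-1}` is
compared with the larger of `⟨m⟩, ⟨n⟩`; for `s < 1` the factor `⟨m⟩^{1-s}` is compared
with the larger of `⟨k⟩, ⟨n⟩`. -/
theorem kernel_le_s7 {s x y z : ℝ} (hs : 1 / 2 < s) (hx : 0 < x) (hy : 0 < y) (hz : 0 < z)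
    (hxyz : x ≤ y + z) (hyxz : y ≤ x + z) :
    x ^ (s - 1) * y ≤ 2 ^ |s - 1| * ((x ^ (-s) + y ^ (-s) + z ^ (-s)) * (y ^ s * z ^ s)) := by
  have e : (x ^ (-s) + y ^ (-s) + z ^ (-s)) * (y ^ s * z ^ s)
      = x ^ (-s) * (y ^ s * z ^ s) + z ^ s + y ^ s := by
    have h1 : y ^ (-s) * y ^ s = 1 := by rw [← Real.rpow_add hy]; simp
    have h2 : z ^ (-s) * z ^ s = 1 := by rw [← Real.rpow_add hz]; simp
    linear_combination z ^ s * h1 + y ^ s * h2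
  rw [e]
  have p1 : 0 < x ^ (-s) * (y ^ s * z ^ s) := by positivity
  have p2 : 0 < y ^ s := by positivity
  have p3 : 0 < z ^ s := by positivity
  have hpow : ∀ t : ℝ, 0 < t → t ^ s = t ^ (s - 1) * t := fun t ht => by
    rw [← Real.rpow_add_one ht.ne']; congr 1; ring
  rcases le_total 1 s with h | h
  · rw [abs_of_nonneg (by linarith)]
    have two : (0 : ℝ) < 2 ^ (s - 1) := by positivity
    rcases le_total z y with hzy | hzy
    · have : x ^ (s - 1) ≤ 2 ^ (s - 1) * y ^ (s - 1) := by
        rw [← Real.mul_rpow (by norm_num) hy.le]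
        exact Real.rpow_le_rpow hx.le (by linarith) (by linarith)
      calc x ^ (s - 1) * y ≤ 2 ^ (s - 1) * y ^ (s - 1) * y := by gcongr
        _ = 2 ^ (s - 1) * y ^ s := by rw [hpow y hy]; ring
        _ ≤ _ := by gcongr; linarith
    · have : x ^ (s - 1) ≤ 2 ^ (s - 1) * z ^ (s - 1) := by
        rw [← Real.mul_rpow (by norm_num) hz.le]
        exact Real.rpow_le_rpow hx.le (by linarith) (by linarith)
      calc x ^ (s - 1) * y ≤ 2 ^ (s - 1) * z ^ (s - 1) * z := by gcongr
        _ = 2 ^ (s - 1) * z ^ s := by rw [hpow z hz]; ring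
        _ ≤ _ := by gcongr; linarith
  · rw [abs_of_nonpos (by linarith), neg_sub]
    have hy1 : y = y ^ (1 - s) * y ^ s := by rw [← Real.rpow_add hy]; simp
    rcases le_total z x with hzx | hzx
    · have : y ^ (1 - s) ≤ 2 ^ (1 - s) * x ^ (1 - s) := by
        rw [← Real.mul_rpow (by norm_num) hx.le]
        exact Real.rpow_le_rpow hy.le (by linarith) (by linarith)
      have hx1 : x ^ (s - 1) * x ^ (1 - s) = 1 := by rw [← Real.rpow_add hx]; simp
      calc x ^ (s - 1) * y = x ^ (s - 1) * (y ^ (1 - s) * y ^ s) := by rw [← hy1]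
        _ ≤ x ^ (s - 1) * (2 ^ (1 - s) * x ^ (1 - s) * y ^ s) := by gcongr
        _ = 2 ^ (1 - s) * y ^ s := by linear_combination (2 ^ (1 - s) * y ^ s) * hx1
        _ ≤ _ := by gcongr; linarith
    · have h1 : y ^ (1 - s) ≤ 2 ^ (1 - s) * z ^ (1 - s) := by
        rw [← Real.mul_rpow (by norm_num) hz.le]
        exact Real.rpow_le_rpow hy.le (by linarith) (by linarith)
      have h2 : z ^ (1 - s) ≤ x ^ (1 - 2 * s) * z ^ s := by
        have : z ^ (1 - s) = z ^ (1 - 2 * s) * z ^ s := by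
          rw [← Real.rpow_add hz]; congr 1; ring
        rw [this]
        gcongr ?_ * _
        exact Real.rpow_le_rpow_of_nonpos hx hzx (by linarith)
      have h3 : x ^ (s - 1) * x ^ (1 - 2 * s) = x ^ (-s) := by
        rw [← Real.rpow_add hx]; congr 1; ring
      calc x ^ (s - 1) * y = x ^ (s - 1) * (y ^ (1 - s) * y ^ s) := by rw [← hy1]
        _ ≤ x ^ (s - 1) * (2 ^ (1 - s) * (x ^ (1 - 2 * s) * z ^ s) * y ^ s) := by
            gcongr; exact h1.trans (by gcongr)
        _ = 2 ^ (1 - s) * (x ^ (-s) * (y ^ s * z ^ s)) := by rw [← h3]; ring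
        _ ≤ _ := by gcongr; linarith

/-! ### The majorant of the Hirota symbol -/

/-- The absolute majorant `∫ (⟨m⟩ + ⟨k-m⟩) |F(m)| |G(k-m)| dm`, as an extended nonnegative number. -/
def majorant (F G : ℝ → ℂ) (k : ℝ) : ENNReal :=
  ∫⁻ m, ENNReal.ofReal ((jb m + jb (k - m)) * (‖F m‖ * ‖G (k - m)‖))

theorem measurable_majorant {F G : ℝ → ℂ} (hF : Measurable F) (hG : Measurable G) :
    Measurable (majorant F G) := by
  have := measurable_jb
  refine Measurable.lintegral_prod_right (f := fun k m : ℝ =>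
    ENNReal.ofReal ((jb m + jb (k - m)) * (‖F m‖ * ‖G (k - m)‖))) ?_
  unfold Function.uncurry
  fun_prop

/-- The weighted density `⟨x⟩^s |F(x)|`, whose square integral is, up to `2π`, the squared
`H^s` norm. -/
def wdens (s : ℝ) (F : ℝ → ℂ) (x : ℝ) : ENNReal := ENNReal.ofReal (jb x ^ s * ‖F x‖)

/-- The weight `⟨x⟩^{-s}`, square integrable exactly when `s > 1/2`. -/
def wt (s : ℝ) (x : ℝ) : ENNReal := ENNReal.ofReal (jb x ^ (-s))

theorem measurable_wdens (s : ℝ) {F : ℝ → ℂ} (hF : Measurable F) : Measurable (wdens s F) := by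
  have := measurable_jb
  unfold wdens; fun_prop

theorem measurable_wt (s : ℝ) : Measurable (wt s) := by
  have := measurable_jb
  unfold wt; fun_prop

theorem lintegral_wdens_sq_ne_top {s : ℝ} {F : ℝ → ℂ} (hF : MemHsFT s F) :
    ∫⁻ x, wdens s F x ^ 2 ≠ ⊤ := by
  have h := hF.2.lintegral_lt_top
  refine ne_of_lt (lt_of_eq_of_lt (lintegral_congr fun x => ?_) h)
  rw [wdens, ← ENNReal.ofReal_pow (by have := jb_pos x; positivity), mul_pow, jb_rpow_sq]

theorem lintegral_wt_sq_ne_top {s : ℝ} (hs : 1 / 2 < s) : ∫⁻ x, wt s x ^ 2 ≠ ⊤ := by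
  have h := (integrable_rpow_neg_one_add_norm_sq (E := ℝ) (μ := volume) (r := 2 * s)
    (by simp; linarith)).lintegral_lt_top
  refine ne_of_lt (lt_of_eq_of_lt (lintegral_congr fun x => ?_) h)
  rw [wt, ← ENNReal.ofReal_pow (by have := jb_pos x; positivity), jb_rpow_sq]
  congr 2
  · simp
  · ring

theorem weighted_majorant_le {s : ℝ} (hs : 1 / 2 < s) {F G : ℝ → ℂ}
    (hF : Measurable F) (hG : Measurable G) (k : ℝ) :
    ENNReal.ofReal (jb k ^ (s - 1)) * majorant F G k ≤
      ENNReal.ofReal (2 * 2 ^ |s - 1|) *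
        (wt s k * (∫⁻ m, wdens s F m * wdens s G (k - m))
          + (∫⁻ m, (wt s m * wdens s F m) * wdens s G (k - m))
          + ∫⁻ m, (wt s m * wdens s G m) * wdens s F (k - m)) := by
  have mF := measurable_wdens s hF
  have mG := measurable_wdens s hG
  have mw := measurable_wt s
  have mj := measurable_jb
  rw [conv_comm (fun m => wt s m * wdens s G m), majorant,
    ← lintegral_const_mul _ (by fun_prop), ← lintegral_const_mul _ (by fun_prop),
    ← lintegral_add_left (by fun_prop), ← lintegral_add_left (by fun_prop),
    ← lintegral_const_mul _ (by fun_prop)]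
  refine lintegral_mono fun m => ?_
  have hk := jb_pos k
  have hm := jb_pos m
  have hn := jb_pos (k - m)
  have t1 : jb k ≤ jb m + jb (k - m) := by simpa using jb_add_le m (k - m)
  have jneg : ∀ x, jb (-x) = jb x := fun x => by simp [jb]
  have t2 : jb m ≤ jb k + jb (k - m) := by
    have := jb_add_le k (-(k - m)); rw [jneg] at this; simpa using this
  have t3 : jb (k - m) ≤ jb k + jb m := by
    have := jb_add_le k (-m); rw [jneg, ← sub_eq_add_neg] at this; exact this
  have k1 := kernel_le_s7 hs hk hm hn t1 t2
  have k2 := kernel_le_s7 hs hk hn hm (by linarith) t3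
  simp only [wt, wdens]
  rw [← ENNReal.ofReal_mul (by positivity), ← ENNReal.ofReal_mul (by positivity),
    ← ENNReal.ofReal_mul (by positivity), ← ENNReal.ofReal_mul (by positivity),
    ← ENNReal.ofReal_mul (by positivity), ← ENNReal.ofReal_mul (by positivity),
    ← ENNReal.ofReal_mul (by positivity), ← ENNReal.ofReal_add (by positivity) (by positivity),
    ← ENNReal.ofReal_add (by positivity) (by positivity), ← ENNReal.ofReal_mul (by positivity)]
  refine ENNReal.ofReal_le_ofReal ?_
  have hFG : 0 ≤ ‖F m‖ * ‖G (k - m)‖ := by positivity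
  have := mul_le_mul_of_nonneg_right (add_le_add k1 k2) hFG
  linarith

/-- The product estimate `H^{s-1} · H^s ⊆ H^{s-1}` for `s > 1/2`. -/
theorem lintegral_weighted_majorant_sq_ne_top {s : ℝ} (hs : 1 / 2 < s) {F G : ℝ → ℂ}
    (mF : Measurable F) (mG : Measurable G) (hF : MemHsFT s F) (hG : MemHsFT s G) :
    ∫⁻ k, (ENNReal.ofReal (jb k ^ (s - 1)) * majorant F G k) ^ 2 ≠ ⊤ := by
  have nF := lintegral_wdens_sq_ne_top hF
  have nG := lintegral_wdens_sq_ne_top hG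
  have nw := lintegral_wt_sq_ne_top hs
  have ma := measurable_wdens s mF
  have mb := measurable_wdens s mG
  have mw := measurable_wt s
  have l1 : ∀ H : ℝ → ℂ, Measurable H → ∫⁻ x, wdens s H x ^ 2 ≠ ⊤ →
      (∫⁻ x, wt s x * wdens s H x) ^ 2 ≠ ⊤ := fun H mH nH =>
    ne_top_of_le_ne_top (ENNReal.mul_ne_top nw nH)
      (lintegral_mul_sq_le_s7 mw (measurable_wdens s mH))
  have b1 : ∫⁻ k, (wt s k * (∫⁻ m, wdens s F m * wdens s G (k - m))) ^ 2 ≠ ⊤ := by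
    refine ne_top_of_le_ne_top (ENNReal.mul_ne_top nw (ENNReal.mul_ne_top nF nG)) ?_
    rw [← lintegral_mul_const _ (mw.pow_const 2)]
    refine lintegral_mono fun k => ?_
    rw [mul_pow]
    gcongr
    exact conv_sq_le ma mb k
  have b2 := ne_top_of_le_ne_top (ENNReal.mul_ne_top (l1 F mF nF) nG)
    (lintegral_conv_sq_le (mw.mul ma) mb)
  have b3 := ne_top_of_le_ne_top (ENNReal.mul_ne_top (l1 G mG nG) nF)
    (lintegral_conv_sq_le (mw.mul mb) ma)
  have mconv : ∀ {a b : ℝ → ENNReal}, Measurable a → Measurable b →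
      Measurable fun k => ∫⁻ m, a m * b (k - m) := fun ha hb =>
    Measurable.lintegral_prod_right
      ((ha.comp measurable_snd).mul (hb.comp (measurable_fst.sub measurable_snd)))
  have m1 := mconv ma mb
  have m2 := mconv (mw.mul ma) mb
  have m3 := mconv (mw.mul mb) ma
  simp only [Pi.mul_apply] at b2 b3 m2 m3
  set C := ENNReal.ofReal (2 * 2 ^ |s - 1|) with hC
  have hfin : C ^ 2 * 9 * ((∫⁻ k, (wt s k * (∫⁻ m, wdens s F m * wdens s G (k - m))) ^ 2)
      + (∫⁻ k, (∫⁻ m, wt s m * wdens s F m * wdens s G (k - m)) ^ 2)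
      + ∫⁻ k, (∫⁻ m, wt s m * wdens s G m * wdens s F (k - m)) ^ 2) ≠ ⊤ :=
    ENNReal.mul_ne_top (ENNReal.mul_ne_top (ENNReal.pow_ne_top ENNReal.ofReal_ne_top)
      (by norm_num)) (ENNReal.add_ne_top.2 ⟨ENNReal.add_ne_top.2 ⟨b1, b2⟩, b3⟩)
  refine ne_top_of_le_ne_top hfin ?_
  rw [← lintegral_add_left (by fun_prop), ← lintegral_add_left (by fun_prop),
    ← lintegral_const_mul _ (by fun_prop)]
  refine lintegral_mono fun k => ?_
  refine (pow_le_pow_left' (weighted_majorant_le hs mF mG k) 2).trans ?_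
  rw [mul_pow, mul_assoc]
  gcongr
  exact add_three_sq_le_s7 _ _ _

/-! ### The symbol: bounds, measurability and pointwise convergence -/

theorem norm_symbol_le {α : ℝ} (h0 : 0 < α) (h1 : α ≤ 1) (x : ℝ) :
    ‖(Complex.I * (x : ℂ)) ^ (α : ℂ)‖ ≤ jb x := by
  rw [Complex.norm_cpow_real, norm_mul, Complex.norm_I, one_mul, Complex.norm_real,
    Real.norm_eq_abs]
  calc |x| ^ α ≤ jb x ^ α := Real.rpow_le_rpow (abs_nonneg x) (abs_le_jb x) h0.le
    _ ≤ jb x ^ (1 : ℝ) := Real.rpow_le_rpow_of_exponent_le (one_le_jb x) h1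
    _ = jb x := Real.rpow_one _

/-- The integrand of `hirotaSymbolFT`. -/
def integrand (α : ℝ) (F G : ℝ → ℂ) (k m : ℝ) : ℂ :=
  ((Complex.I * (m : ℂ)) ^ (α : ℂ) - (Complex.I * ((k - m : ℝ) : ℂ)) ^ (α : ℂ)) *
    F m * G (k - m)

theorem norm_integrand_le {α : ℝ} (h0 : 0 < α) (h1 : α ≤ 1) (F G : ℝ → ℂ) (k m : ℝ) :
    ‖integrand α F G k m‖ ≤ (jb m + jb (k - m)) * (‖F m‖ * ‖G (k - m)‖) := by
  rw [integrand, mul_assoc, norm_mul, norm_mul]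
  gcongr
  exact (norm_sub_le _ _).trans
    (add_le_add (norm_symbol_le h0 h1 m) (norm_symbol_le h0 h1 (k - m)))

theorem measurable_integrand (α : ℝ) {F G : ℝ → ℂ} (hF : Measurable F) (hG : Measurable G) :
    Measurable (Function.uncurry (integrand α F G)) := by
  unfold integrand Function.uncurry
  fun_prop

theorem tendsto_integrand (F G : ℝ → ℂ) (k m : ℝ) :
    Filter.Tendsto (fun α => integrand α F G k m) (nhdsWithin 1 (Set.Iio 1))
      (nhds (integrand 1 F G k m)) := by
  have h : ∀ z : ℂ, Filter.Tendsto (fun α : ℝ => z ^ (α : ℂ)) (nhdsWithin 1 (Set.Iio 1))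
      (nhds (z ^ ((1 : ℝ) : ℂ))) := fun z => by
    have h1 : ContinuousAt (fun w : ℂ => z ^ w) ((1 : ℝ) : ℂ) :=
      continuousAt_const_cpow' (by simp)
    exact (h1.tendsto.comp (Complex.continuous_ofReal.tendsto 1)).mono_left
      nhdsWithin_le_nhds
  exact (((h _).sub (h _)).mul_const _).mul_const _

theorem eventually_exponent : ∀ᶠ α : ℝ in nhdsWithin 1 (Set.Iio 1), 0 < α ∧ α ≤ 1 := by
  filter_upwards [self_mem_nhdsWithin, nhdsWithin_le_nhds (lt_mem_nhds zero_lt_one)] with α h1 h0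
  exact ⟨h0, le_of_lt h1⟩

theorem tendsto_hirota {F G : ℝ → ℂ} (hF : Measurable F) (hG : Measurable G) {k : ℝ}
    (hk : majorant F G k ≠ ⊤) :
    Filter.Tendsto (fun α => hirotaSymbolFT α F G k) (nhdsWithin 1 (Set.Iio 1))
      (nhds (hirotaSymbolFT 1 F G k)) := by
  have mj := measurable_jb
  refine Filter.Tendsto.const_mul _ ?_
  refine tendsto_integral_filter_of_dominated_convergence
    (fun m => (jb m + jb (k - m)) * (‖F m‖ * ‖G (k - m)‖)) ?_ ?_ ?_ ?_
  · refine Filter.Eventually.of_forall fun α => ?_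
    exact ((measurable_integrand α hF hG).comp measurable_prodMk_left).aestronglyMeasurable
  · filter_upwards [eventually_exponent] with α hα
    exact Filter.Eventually.of_forall fun m => norm_integrand_le hα.1 hα.2 F G k m
  · refine (lintegral_ofReal_ne_top_iff_integrable ?_ ?_).1 hk
    · exact Measurable.aestronglyMeasurable (by fun_prop)
    · refine Filter.Eventually.of_forall fun m => ?_
      have := jb_pos m
      have := jb_pos (k - m)
      show (0 : ℝ) ≤ _
      positivity
  · exact Filter.Eventually.of_forall fun m => tendsto_integrand F G k m

theorem norm_hirota_le {α : ℝ} (h0 : 0 < α) (h1 : α ≤ 1) {F G : ℝ → ℂ} {k : ℝ}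
    (hk : majorant F G k ≠ ⊤) :
    ‖hirotaSymbolFT α F G k‖ ≤ (2 * Real.pi)⁻¹ * (majorant F G k).toReal := by
  have hpi := Real.pi_pos
  rw [hirotaSymbolFT, norm_mul, norm_inv, Complex.norm_real, Real.norm_of_nonneg (by positivity)]
  gcongr
  refine (norm_integral_le_lintegral_norm _).trans (ENNReal.toReal_mono hk ?_)
  exact lintegral_mono fun m => ENNReal.ofReal_le_ofReal (norm_integrand_le h0 h1 F G k m)

theorem measurable_hirota (α : ℝ) {F G : ℝ → ℂ} (hF : Measurable F) (hG : Measurable G) :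
    Measurable (hirotaSymbolFT α F G) :=
  ((measurable_integrand α hF hG).stronglyMeasurable.integral_prod_right).measurable.const_mul _

theorem hirota_congr (α : ℝ) {F G F' G' : ℝ → ℂ} (hF : F =ᵐ[volume] F') (hG : G =ᵐ[volume] G') :
    hirotaSymbolFT α F G = hirotaSymbolFT α F' G' := by
  funext k
  unfold hirotaSymbolFT
  congr 1
  refine integral_congr_ae ?_
  have hG' := (quasiMeasurePreserving_sub_left_of_right_invariant volume k).ae_eq_comp hG
  filter_upwards [hF, hG'] with m h1 h2
  simp only [Function.comp_apply] at h2
  rw [h1, h2]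

theorem memHs_congr {s : ℝ} {F F' : ℝ → ℂ} (h : F =ᵐ[volume] F') (hF : MemHsFT s F) :
    MemHsFT s F' := by
  refine ⟨hF.1.congr h, hF.2.congr ?_⟩
  filter_upwards [h] with k hk
  rw [hk]

theorem tendsto_hirota_norm {s : ℝ} (hs : 1 / 2 < s) {F G : ℝ → ℂ}
    (mF : Measurable F) (mG : Measurable G) (hF : MemHsFT s F) (hG : MemHsFT s G) :
    Filter.Tendsto
      (fun α : ℝ => Real.sqrt (hsNormSq (s - 1)
        (fun k => hirotaSymbolFT α F G k - hirotaSymbolFT 1 F G k)))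
      (nhdsWithin 1 (Set.Iio 1)) (nhds 0) := by
  have hfin := lintegral_weighted_majorant_sq_ne_top hs mF mG hF hG
  have mj := measurable_jb
  have mM := measurable_majorant mF mG
  have mΨ : Measurable fun k => (ENNReal.ofReal (jb k ^ (s - 1)) * majorant F G k) ^ 2 := by
    fun_prop
  have hae : ∀ᵐ k : ℝ, majorant F G k ≠ ⊤ := by
    filter_upwards [ae_lt_top mΨ hfin] with k hk htop
    have hpos : ENNReal.ofReal (jb k ^ (s - 1)) ≠ 0 := by
      have := jb_pos k
      exact (ENNReal.ofReal_pos.2 (by positivity)).ne'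
    rw [htop, ENNReal.mul_top hpos] at hk
    simp at hk
  have key : Filter.Tendsto (fun α : ℝ => ∫ k : ℝ, (1 + k ^ 2) ^ (s - 1) *
      ‖hirotaSymbolFT α F G k - hirotaSymbolFT 1 F G k‖ ^ 2)
      (nhdsWithin 1 (Set.Iio 1)) (nhds (∫ _ : ℝ, (0 : ℝ))) := by
    refine tendsto_integral_filter_of_dominated_convergence
      (fun k => (2 * (2 * Real.pi)⁻¹) ^ 2 *
        ((ENNReal.ofReal (jb k ^ (s - 1)) * majorant F G k) ^ 2).toReal) ?_ ?_ ?_ ?_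
    · refine Filter.Eventually.of_forall fun α => Measurable.aestronglyMeasurable ?_
      have h1 := measurable_hirota α mF mG
      have h2 := measurable_hirota 1 mF mG
      fun_prop
    · filter_upwards [eventually_exponent] with α hα
      filter_upwards [hae] with k hk
      have hp := jb_pos k
      rw [Real.norm_of_nonneg (by positivity), ENNReal.toReal_pow, ENNReal.toReal_mul,
        ENNReal.toReal_ofReal (by positivity), mul_pow (jb k ^ (s - 1)), jb_rpow_sq]
      have b : ‖hirotaSymbolFT α F G k - hirotaSymbolFT 1 F G k‖
          ≤ 2 * (2 * Real.pi)⁻¹ * (majorant F G k).toReal := by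
        have a1 := norm_hirota_le hα.1 hα.2 hk
        have a2 := norm_hirota_le one_pos le_rfl hk
        linarith [norm_sub_le (hirotaSymbolFT α F G k) (hirotaSymbolFT 1 F G k)]
      calc (1 + k ^ 2) ^ (s - 1) * ‖hirotaSymbolFT α F G k - hirotaSymbolFT 1 F G k‖ ^ 2
          ≤ (1 + k ^ 2) ^ (s - 1) * (2 * (2 * Real.pi)⁻¹ * (majorant F G k).toReal) ^ 2 := by
            gcongr
        _ = _ := by ring
    · exact (integrable_toReal_of_lintegral_ne_top mΨ.aemeasurable hfin).const_mul _
    · filter_upwards [hae] with k hk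
      have h := tendsto_hirota mF mG hk
      have h' := (((h.sub_const (hirotaSymbolFT 1 F G k)).norm.pow 2).const_mul
        ((1 + k ^ 2) ^ (s - 1)))
      simpa using h'
  have := ((key.const_mul (2 * Real.pi)⁻¹)).sqrt
  simpa [hsNormSq] using this

/-- for `s > 1/2` and `f, g ∈ H^s(ℝ)`, `D^α f·g → D f·g = f'g − fg'` in
`H^{s−1}(ℝ)` as `α → 1⁻`, i.e. `‖D^α f·g − (f'g − fg')‖_{H^{s−1}} → 0`. -/
theorem stmt7 (s : ℝ) (hs : 1 / 2 < s) (F G : ℝ → ℂ)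
    (hF : MemHsFT s F) (hG : MemHsFT s G) :
    Filter.Tendsto
      (fun α : ℝ => Real.sqrt (hsNormSq (s - 1)
        (fun k => hirotaSymbolFT α F G k - hirotaSymbolFT 1 F G k)))
      (nhdsWithin 1 (Set.Iio 1)) (nhds 0) := by
  have eF := hF.1.ae_eq_mk
  have eG := hG.1.ae_eq_mk
  simp only [hirota_congr _ eF eG]
  exact tendsto_hirota_norm hs hF.1.stronglyMeasurable_mk.measurable
    hG.1.stronglyMeasurable_mk.measurable (memHs_congr eF hF) (memHs_congr eG hG)
end
end

section
/- Let 0<α<1 and k∈ℝ. Then the absolutely convergent integral ∫₀^∞ (1 − e^{−iky}) y^{−1−α} dy equals −Γ(−α) (ik)^α, where (ik)^α is the principal-branch power (the limit of (ε+ik)^α as ε→0⁺). -/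
/-!
Put `F z = ∫₀^∞ (1 - e^{-zy}) y^{-1-α} dy`. For `0 ≤ re z` the numerator is bounded both by `2`
and by `2‖z‖y`, so the integrand has the integrable majorant `min (2‖z‖ y^{-α}) (2 y^{-1-α})`,
locally uniformly in `z`.

For real `z = r > 0`, integration by parts gives
`F r = (r/α) ∫₀^∞ y^{-α} e^{-ry} dy = r^α Γ(1-α)/α = -Γ(-α) r^α`. Since `F` is holomorphic on the
open right half-plane (differentiation under the integral), the identity theorem gives
`F z = -Γ(-α) z^α` there. For `k ≠ 0` the principal power is continuous at `ik`, and dominated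
convergence along `ε + ik`, `ε → 0⁺`, gives the formula at `ik`; for `k = 0` both sides vanish.
-/

open MeasureTheory

noncomputable section

open Set Filter Topology

namespace FracSymbol

/-- The integrand `(1 - e^{-zy}) y^{-1-α}`, with `ik` replaced by a general complex `z`. -/
def kernel (α : ℝ) (z : ℂ) (y : ℝ) : ℂ :=
  (1 - Complex.exp (-(z * (y : ℂ)))) / ((y ^ (1 + α) : ℝ) : ℂ)

/-- A majorant of `kernel α z` valid for all `z` with `0 ≤ re z` and `2‖z‖ ≤ C`. -/
def majorant (α C : ℝ) (y : ℝ) : ℝ := min (C * y ^ (-α)) (2 * y ^ (-1 - α))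

lemma norm_one_sub_exp_neg_le_two {w : ℂ} (hw : 0 ≤ w.re) : ‖1 - Complex.exp (-w)‖ ≤ 2 := by
  have h : ‖Complex.exp (-w)‖ ≤ 1 := by
    rw [Complex.norm_exp]; simpa using hw
  calc _ ≤ ‖(1 : ℂ)‖ + ‖Complex.exp (-w)‖ := norm_sub_le _ _
    _ ≤ 2 := by rw [norm_one]; linarith

lemma norm_one_sub_exp_neg_le {w : ℂ} (hw : 0 ≤ w.re) :
    ‖1 - Complex.exp (-w)‖ ≤ 2 * ‖w‖ := by
  rcases le_total ‖w‖ 1 with h | h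
  · rw [norm_sub_rev]
    simpa using Complex.norm_exp_sub_one_le (x := -w) (by simpa using h)
  · linarith [norm_one_sub_exp_neg_le_two hw]

lemma norm_kernel_le {α C : ℝ} {z : ℂ} (hz : 0 ≤ z.re) (hC : 2 * ‖z‖ ≤ C)
    {y : ℝ} (hy : 0 < y) : ‖kernel α z y‖ ≤ majorant α C y := by
  have hw : 0 ≤ (z * (y : ℂ)).re := by simpa using mul_nonneg hz hy.le
  have hp : 0 < y ^ (1 + α) := Real.rpow_pos_of_pos hy _
  have e1 : y ^ (-1 - α) = (y ^ (1 + α))⁻¹ := by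
    rw [← Real.rpow_neg hy.le]; ring_nf
  have e2 : y ^ (-α) = y * (y ^ (1 + α))⁻¹ := by
    rw [show -α = 1 - (1 + α) by ring, Real.rpow_sub hy, Real.rpow_one, div_eq_mul_inv]
  rw [kernel, norm_div, Complex.norm_real, Real.norm_of_nonneg hp.le, majorant, e1, e2,
    div_eq_mul_inv]
  refine le_min ?_ ?_
  · rw [← mul_assoc]
    gcongr
    calc _ ≤ 2 * ‖z * (y : ℂ)‖ := norm_one_sub_exp_neg_le hw
      _ = 2 * ‖z‖ * y := by
        rw [norm_mul, Complex.norm_real, Real.norm_of_nonneg hy.le]; ring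
      _ ≤ C * y := by gcongr
  · gcongr
    exact norm_one_sub_exp_neg_le_two hw

lemma integrableOn_majorant {α : ℝ} (hα0 : 0 < α) (hα1 : α < 1) {C : ℝ} (hC : 0 ≤ C) :
    IntegrableOn (majorant α C) (Ioi 0) := by
  have hmeas : Measurable (majorant α C) := by unfold majorant; fun_prop
  have hnn : ∀ y : ℝ, 0 < y → 0 ≤ majorant α C y := fun y hy => by
    unfold majorant; positivity
  rw [← Ioc_union_Ioi_eq_Ioi (zero_le_one : (0 : ℝ) ≤ 1)]
  refine IntegrableOn.union ?_ ?_
  · have h : IntegrableOn (fun y : ℝ => C * y ^ (-α)) (Ioc 0 1) :=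
      ((intervalIntegrable_iff_integrableOn_Ioc_of_le zero_le_one).1
        (intervalIntegral.intervalIntegrable_rpow' (by linarith))).const_mul C
    refine h.mono' hmeas.aestronglyMeasurable ?_
    filter_upwards [ae_restrict_mem measurableSet_Ioc] with y hy
    rw [Real.norm_of_nonneg (hnn y hy.1)]
    exact min_le_left _ _
  · have h : IntegrableOn (fun y : ℝ => 2 * y ^ (-1 - α)) (Ioi 1) :=
      (integrableOn_Ioi_rpow_of_lt (by linarith) zero_lt_one).const_mul 2
    refine h.mono' hmeas.aestronglyMeasurable ?_
    filter_upwards [ae_restrict_mem measurableSet_Ioi] with y hy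
    rw [Real.norm_of_nonneg (hnn y (zero_lt_one.trans hy))]
    exact min_le_right _ _

lemma measurable_kernel (α : ℝ) (z : ℂ) : Measurable (kernel α z) := by
  unfold kernel; fun_prop

lemma integrableOn_kernel {α : ℝ} (hα0 : 0 < α) (hα1 : α < 1) {z : ℂ} (hz : 0 ≤ z.re) :
    IntegrableOn (kernel α z) (Ioi 0) := by
  refine (integrableOn_majorant hα0 hα1 (C := 2 * ‖z‖) (by positivity)).mono'
    (measurable_kernel α z).aestronglyMeasurable ?_
  filter_upwards [ae_restrict_mem measurableSet_Ioi] with y hy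
  exact norm_kernel_le hz le_rfl hy

/-- Integration by parts against `-y^{-α}/α` reduces the real case to Euler's integral
for `Γ(1 - α)`. -/
lemma integral_kernel_ofReal {α : ℝ} (hα0 : 0 < α) (hα1 : α < 1) {r : ℝ} (hr : 0 < r) :
    ∫ y in Ioi (0 : ℝ), kernel α r y = -(Real.Gamma (-α) : ℂ) * (r : ℂ) ^ (α : ℂ) := by
  have hG : Real.Gamma (1 - α) = -α * Real.Gamma (-α) := by
    rw [← Real.Gamma_add_one (by linarith)]; ring_nf
  have hreal : ∀ y ∈ Ioi (0 : ℝ), kernel α r y =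
      (((1 - Real.exp (-(r * y))) * y ^ (-1 - α) : ℝ) : ℂ) := by
    intro y (hy : 0 < y)
    have e1 : y ^ (-1 - α) = (y ^ (1 + α))⁻¹ := by
      rw [← Real.rpow_neg hy.le]; ring_nf
    rw [kernel, e1]; push_cast; rw [div_eq_mul_inv]
  have hint : IntegrableOn (fun y : ℝ => (1 - Real.exp (-(r * y))) * y ^ (-1 - α)) (Ioi 0) := by
    have h := (integrableOn_kernel hα0 hα1 (z := r) (by simpa using hr.le)).congr_fun hreal
      measurableSet_Ioi
    exact h.re
  have hexp : IntegrableOn (fun y : ℝ => y ^ (-α) * Real.exp (-(r * y))) (Ioi 0) := by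
    have := integrableOn_rpow_mul_exp_neg_mul_rpow (p := 1) (s := -α) (b := r)
      (by linarith) one_pos hr
    simpa using this
  have hle : ∀ y : ℝ, 0 ≤ y → 0 ≤ 1 - Real.exp (-(r * y)) := fun y hy => by
    have : Real.exp (-(r * y)) ≤ 1 := Real.exp_le_one_iff.2 (by nlinarith)
    linarith
  have key := integral_Ioi_mul_deriv_eq_deriv_mul (a := (0 : ℝ)) (a' := 0) (b' := 0)
    (u := fun y : ℝ => 1 - Real.exp (-(r * y))) (u' := fun y => r * Real.exp (-(r * y)))
    (v := fun y : ℝ => -α⁻¹ * y ^ (-α)) (v' := fun y => y ^ (-1 - α))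
    (fun y _ => by
      have := ((((hasDerivAt_id y).const_mul r).neg).exp).const_sub 1
      exact this.congr_deriv (by simp only [Pi.neg_apply, id]; ring))
    (fun y hy => by
      have := (Real.hasDerivAt_rpow_const (p := -α) (Or.inl (ne_of_gt hy))).const_mul (-α⁻¹)
      convert this using 1
      rw [show -α - 1 = -1 - α by ring]; field_simp)
    hint
    (by
      refine IntegrableOn.congr_fun (hexp.const_mul (-α⁻¹ * r)) (fun y _ => ?_) measurableSet_Ioi
      simp only [Pi.mul_apply]; ring)
    (by
      have hlim : Tendsto (fun y : ℝ => α⁻¹ * r * y ^ (1 - α)) (𝓝[>] 0) (𝓝 0) := by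
        have : ContinuousAt (fun y : ℝ => α⁻¹ * r * y ^ (1 - α)) 0 :=
          (Real.continuousAt_rpow_const _ _ (Or.inr (by linarith))).const_mul _
        have h := this.tendsto
        rw [Real.zero_rpow (by linarith), mul_zero] at h
        exact h.mono_left nhdsWithin_le_nhds
      refine squeeze_zero_norm' ?_ hlim
      filter_upwards [self_mem_nhdsWithin] with y (hy : 0 < y)
      have h1 : 1 - Real.exp (-(r * y)) ≤ r * y := by
        linarith [Real.add_one_le_exp (-(r * y))]
      have h2 : y ^ (1 - α) = y * y ^ (-α) := by
        rw [sub_eq_add_neg, Real.rpow_add hy, Real.rpow_one]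
      simp only [Pi.mul_apply, norm_mul, norm_neg]
      rw [Real.norm_of_nonneg (hle y hy.le), Real.norm_of_nonneg (by positivity : 0 ≤ α⁻¹),
        Real.norm_of_nonneg (by positivity : 0 ≤ y ^ (-α)), h2]
      calc _ ≤ r * y * (α⁻¹ * y ^ (-α)) := by gcongr
        _ = _ := by ring)
    (by
      have hlim : Tendsto (fun y : ℝ => α⁻¹ * y ^ (-α)) atTop (𝓝 0) := by
        simpa using (tendsto_rpow_neg_atTop hα0).const_mul α⁻¹
      refine squeeze_zero_norm' ?_ hlim
      filter_upwards [eventually_gt_atTop 0] with y hy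
      simp only [Pi.mul_apply, norm_mul, norm_neg]
      rw [Real.norm_of_nonneg (hle y hy.le), Real.norm_of_nonneg (by positivity : 0 ≤ α⁻¹),
        Real.norm_of_nonneg (by positivity : 0 ≤ y ^ (-α))]
      have : 1 - Real.exp (-(r * y)) ≤ 1 := by linarith [Real.exp_pos (-(r * y))]
      calc _ ≤ 1 * (α⁻¹ * y ^ (-α)) := by gcongr
        _ = _ := by ring)
  have hE := Real.integral_rpow_mul_exp_neg_mul_Ioi (a := 1 - α) (by linarith) hr
  rw [show 1 - α - 1 = -α by ring] at hE
  have h2 : ∫ y in Ioi (0 : ℝ), r * Real.exp (-(r * y)) * (-α⁻¹ * y ^ (-α)) =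
      (-α⁻¹ * r) * ((1 / r) ^ (1 - α) * Real.Gamma (1 - α)) := by
    rw [← hE, ← integral_const_mul]
    congr 1; ext y; ring
  have h3 : r * (1 / r) ^ (1 - α) = r ^ α := by
    rw [one_div, Real.inv_rpow hr.le, ← Real.rpow_neg hr.le]
    nth_rewrite 1 [← Real.rpow_one r]
    rw [← Real.rpow_add hr]; ring_nf
  rw [setIntegral_congr_fun measurableSet_Ioi hreal, integral_complex_ofReal, key, h2, hG,
    ← Complex.ofReal_cpow hr.le, ← h3]
  rw [← Complex.ofReal_neg, ← Complex.ofReal_mul]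
  congr 1
  field_simp; ring

lemma differentiableAt_integral_kernel {α : ℝ} (hα0 : 0 < α) (hα1 : α < 1) {z : ℂ}
    (hz : 0 < z.re) :
    DifferentiableAt ℂ (fun w => ∫ y in Ioi (0 : ℝ), kernel α w y) z := by
  have hball : ∀ w ∈ Metric.ball z (z.re / 2), z.re / 2 < w.re := by
    intro w hw
    have h1 : |(w - z).re| < z.re / 2 :=
      (Complex.abs_re_le_norm _).trans_lt (by simpa [dist_eq_norm] using hw)
    have := (abs_lt.1 h1).1
    rw [Complex.sub_re] at this; linarith
  have hexp : IntegrableOn (fun y : ℝ => y ^ (-α) * Real.exp (-(z.re / 2 * y))) (Ioi 0) := by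
    have := integrableOn_rpow_mul_exp_neg_mul_rpow (p := 1) (s := -α) (b := z.re / 2)
      (by linarith) one_pos (by linarith)
    simpa using this
  refine (hasDerivAt_integral_of_dominated_loc_of_deriv_le
    (F' := fun w y => (y : ℂ) * Complex.exp (-(w * (y : ℂ))) / ((y ^ (1 + α) : ℝ) : ℂ))
    (Metric.ball_mem_nhds z (half_pos hz))
    (Eventually.of_forall fun w => (measurable_kernel α w).aestronglyMeasurable)
    (integrableOn_kernel hα0 hα1 hz.le) ?_ ?_ hexp ?_).2.differentiableAt
  · refine Measurable.aestronglyMeasurable ?_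
    fun_prop
  · filter_upwards [ae_restrict_mem measurableSet_Ioi] with y (hy : 0 < y) w hw
    have e : y ^ (-α) = y / y ^ (1 + α) := by
      rw [show -α = 1 - (1 + α) by ring, Real.rpow_sub hy, Real.rpow_one]
    rw [norm_div, norm_mul, Complex.norm_real, Complex.norm_real, Complex.norm_exp,
      Real.norm_of_nonneg hy.le, Real.norm_of_nonneg (by positivity), e]
    have : (-(w * (y : ℂ))).re ≤ -(z.re / 2 * y) := by
      have := hball w hw
      simp; nlinarith
    calc _ ≤ y * Real.exp (-(z.re / 2 * y)) / y ^ (1 + α) := by gcongr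
      _ = _ := by ring
  · filter_upwards with y w _
    have := (((((hasDerivAt_id w).mul_const (y : ℂ)).neg).cexp).const_sub 1).div_const
      ((y ^ (1 + α) : ℝ) : ℂ)
    exact this.congr_deriv (by simp only [Pi.neg_apply, id]; ring)

/-- The identity theorem carries the formula from the positive real axis to the open right
half-plane. -/
lemma integral_kernel_of_re_pos {α : ℝ} (hα0 : 0 < α) (hα1 : α < 1) {z : ℂ} (hz : 0 < z.re) :
    ∫ y in Ioi (0 : ℝ), kernel α z y = -(Real.Gamma (-α) : ℂ) * z ^ (α : ℂ) := by
  have hopen : IsOpen {w : ℂ | 0 < w.re} := isOpen_lt continuous_const Complex.continuous_re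
  have hF : AnalyticOnNhd ℂ (fun w => ∫ y in Ioi (0 : ℝ), kernel α w y) {w : ℂ | 0 < w.re} :=
    DifferentiableOn.analyticOnNhd
      (fun w hw => (differentiableAt_integral_kernel hα0 hα1 hw).differentiableWithinAt) hopen
  have hG : AnalyticOnNhd ℂ (fun w : ℂ => -(Real.Gamma (-α) : ℂ) * w ^ (α : ℂ))
      {w : ℂ | 0 < w.re} := by
    refine DifferentiableOn.analyticOnNhd (fun w hw => ?_) hopen
    exact ((differentiableAt_id.cpow_const (Or.inl hw)).const_mul _).differentiableWithinAt
  refine hF.eqOn_of_preconnected_of_frequently_eq hG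
    (convex_halfSpace_re_gt 0).isPreconnected (z₀ := 1) (by simp) ?_ hz
  -- the points `1 + t` with `t → 0⁺` are real, differ from `1` and accumulate there
  have ht : Tendsto (fun t : ℝ => ((1 + t : ℝ) : ℂ)) (𝓝[>] 0) (𝓝[≠] 1) := by
    refine tendsto_nhdsWithin_iff.2 ⟨?_, ?_⟩
    · have : ContinuousAt (fun t : ℝ => ((1 + t : ℝ) : ℂ)) 0 := by fun_prop
      have h := this.tendsto
      simp only [add_zero, Complex.ofReal_one] at h
      exact h.mono_left nhdsWithin_le_nhds
    · filter_upwards [self_mem_nhdsWithin] with t (ht : 0 < t)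
      simpa using ht.ne'
  refine ht.frequently (Eventually.frequently ?_)
  filter_upwards [self_mem_nhdsWithin] with t (ht : 0 < t)
  exact integral_kernel_ofReal hα0 hα1 (by linarith)

/-- Dominated convergence along `ε + ik`, `ε → 0⁺`, extends the formula to the imaginary axis. -/
lemma integral_kernel_I_mul {α : ℝ} (hα0 : 0 < α) (hα1 : α < 1) {k : ℝ} (hk : k ≠ 0) :
    ∫ y in Ioi (0 : ℝ), kernel α (Complex.I * k) y =
      -(Real.Gamma (-α) : ℂ) * (Complex.I * k) ^ (α : ℂ) := by
  have hpath : Tendsto (fun ε : ℝ => (ε : ℂ) + Complex.I * k) (𝓝[>] 0) (𝓝 (Complex.I * k)) := by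
    have : ContinuousAt (fun ε : ℝ => (ε : ℂ) + Complex.I * k) 0 := by fun_prop
    have h := this.tendsto
    simp only [Complex.ofReal_zero, zero_add] at h
    exact h.mono_left nhdsWithin_le_nhds
  have hslit : Complex.I * (k : ℂ) ∈ Complex.slitPlane := Or.inr (by simpa using hk)
  have hR := ((continuousAt_cpow_const (b := (α : ℂ)) hslit).tendsto.comp hpath).const_mul
    (-(Real.Gamma (-α) : ℂ))
  have hL : Tendsto (fun ε : ℝ => ∫ y in Ioi (0 : ℝ), kernel α ((ε : ℂ) + Complex.I * k) y)
      (𝓝[>] 0) (𝓝 (∫ y in Ioi (0 : ℝ), kernel α (Complex.I * k) y)) := by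
    refine tendsto_integral_filter_of_dominated_convergence
      (majorant α (2 * (‖Complex.I * (k : ℂ)‖ + 1)))
      (Eventually.of_forall fun ε => (measurable_kernel α _).aestronglyMeasurable) ?_
      (integrableOn_majorant hα0 hα1 (by positivity)) ?_
    · filter_upwards [self_mem_nhdsWithin,
        hpath.norm.eventually_le_const (lt_add_one ‖Complex.I * (k : ℂ)‖)] with ε (hε : 0 < ε) hn
      filter_upwards [ae_restrict_mem measurableSet_Ioi] with y hy
      exact norm_kernel_le (by simpa using hε.le) (by linarith) hy
    · filter_upwards with y
      have : Continuous fun w : ℂ => kernel α w y := by unfold kernel; fun_prop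
      exact (this.tendsto _).comp hpath
  refine tendsto_nhds_unique hL (hR.congr' ?_)
  filter_upwards [self_mem_nhdsWithin] with ε (hε : 0 < ε)
  exact (integral_kernel_of_re_pos hα0 hα1 (by simpa using hε)).symm

end FracSymbol

/-- for `0 < α < 1` and `k ∈ ℝ`, the integral
`∫₀^∞ (1 − e^{−iky}) y^{−1−α} dy` is absolutely convergent and equals `−Γ(−α)(ik)^α`,
with the principal-branch power `(ik)^α` (the boundary value of `(ε+ik)^α` as `ε → 0⁺`,
which is Mathlib's principal `cpow`). -/
theorem stmt9 (α : ℝ) (hα0 : 0 < α) (hα1 : α < 1) (k : ℝ) :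
    IntegrableOn
      (fun y : ℝ => (1 - Complex.exp (-(Complex.I * (k : ℂ) * (y : ℂ)))) / ((y ^ (1 + α) : ℝ) : ℂ))
      (Set.Ioi 0) volume ∧
    ∫ y in Set.Ioi (0 : ℝ),
        (1 - Complex.exp (-(Complex.I * (k : ℂ) * (y : ℂ)))) / ((y ^ (1 + α) : ℝ) : ℂ)
      = -((Real.Gamma (-α) : ℂ)) * (Complex.I * (k : ℂ)) ^ (α : ℂ) := by
  refine ⟨FracSymbol.integrableOn_kernel hα0 hα1 (by simp), ?_⟩
  rcases eq_or_ne k 0 with rfl | hk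
  · simp [hα0.ne']
  · exact FracSymbol.integral_kernel_I_mul hα0 hα1 hk
end
end

section
/- Let 0<α<1 and let s be a complex number with Re s > 0. Then ∫₀^∞ (e^{−sy} − 1) y^{−1−α} dy = Γ(−α) s^α, where s^α is the principal-branch power and Γ(−α) = −Γ(1−α)/α. -/
/-!
Integrate by parts, differentiating `e^{-sy} - 1` and integrating `y^{-1-α}` to `-y^{-α}/α`.
The boundary terms vanish because `‖e^{-sy} - 1‖ ≤ min (2‖s‖y) 2`, and what remains is
`-(s/α) ∫ y^{-α} e^{-sy} dy`. The last integral equals `Γ(1-α) s^{α-1}`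
(`integral_rpow_mul_cexp`): both sides are holomorphic in the half plane `Re s > 0`
(`differentiableAt_integral_rpow_mul_cexp`) and agree for real `s` by the real Gamma integral, so
the identity theorem applies. Finally `Γ(1-α) = -α Γ(-α)`.
-/

open MeasureTheory

noncomputable section

lemma norm_cexp_neg_sub_one_le_two {z : ℂ} (hz : 0 ≤ z.re) : ‖Complex.exp (-z) - 1‖ ≤ 2 := by
  have h : ‖Complex.exp (-z)‖ ≤ 1 := by
    rw [Complex.norm_exp]
    simpa using hz
  calc ‖Complex.exp (-z) - 1‖ ≤ ‖Complex.exp (-z)‖ + ‖(1 : ℂ)‖ := norm_sub_le _ _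
    _ ≤ 2 := by rw [norm_one]; linarith

lemma norm_cexp_neg_sub_one_le {z : ℂ} (hz : 0 ≤ z.re) :
    ‖Complex.exp (-z) - 1‖ ≤ 2 * ‖z‖ := by
  rcases le_total ‖z‖ 1 with h | h
  · simpa using Complex.norm_exp_sub_one_le (x := -z) (by simpa using h)
  · linarith [norm_cexp_neg_sub_one_le_two hz]

lemma norm_rpow_mul_cexp (a : ℝ) (s : ℂ) {t : ℝ} (ht : 0 < t) :
    ‖((t ^ a : ℝ) : ℂ) * Complex.exp (-(s * t))‖ = t ^ a * Real.exp (-s.re * t) := by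
  rw [norm_mul, Complex.norm_exp, Complex.norm_of_nonneg (by positivity)]
  simp

lemma aestronglyMeasurable_rpow_mul_cexp (a : ℝ) (s : ℂ) :
    AEStronglyMeasurable (fun t : ℝ ↦ ((t ^ a : ℝ) : ℂ) * Complex.exp (-(s * t)))
      (volume.restrict (Set.Ioi 0)) := by
  apply Measurable.aestronglyMeasurable
  fun_prop

lemma integrableOn_rpow_mul_rexp {a r : ℝ} (ha : -1 < a) (hr : 0 < r) :
    IntegrableOn (fun t : ℝ ↦ t ^ a * Real.exp (-r * t)) (Set.Ioi 0) := by
  simpa using integrableOn_rpow_mul_exp_neg_mul_rpow ha one_pos hr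

lemma integrableOn_rpow_mul_cexp {a : ℝ} {s : ℂ} (ha : -1 < a) (hs : 0 < s.re) :
    IntegrableOn (fun t : ℝ ↦ ((t ^ a : ℝ) : ℂ) * Complex.exp (-(s * t))) (Set.Ioi 0) := by
  refine Integrable.mono' (integrableOn_rpow_mul_rexp ha hs)
    (aestronglyMeasurable_rpow_mul_cexp a s) ?_
  filter_upwards [ae_restrict_mem measurableSet_Ioi] with t ht
  exact (norm_rpow_mul_cexp a s ht).le

/-- Differentiation under the integral sign; on the half plane `Re x > Re s / 2` the derivative is
dominated by `t ^ (a + 1) * e^{-(Re s / 2) t}`. -/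
lemma differentiableAt_integral_rpow_mul_cexp {a : ℝ} {s : ℂ} (ha : -1 < a) (hs : 0 < s.re) :
    DifferentiableAt ℂ
      (fun s : ℂ ↦ ∫ t in Set.Ioi (0 : ℝ), ((t ^ a : ℝ) : ℂ) * Complex.exp (-(s * t))) s := by
  have hU : {x : ℂ | s.re / 2 < x.re} ∈ nhds s :=
    (isOpen_lt continuous_const Complex.continuous_re).mem_nhds (half_lt_self hs)
  refine (hasDerivAt_integral_of_dominated_loc_of_deriv_le
    (F' := fun x t ↦ ((t ^ a : ℝ) : ℂ) * (Complex.exp (-(x * t)) * (-(t : ℂ))))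
    (bound := fun t ↦ t ^ (a + 1) * Real.exp (-(s.re / 2) * t)) hU
    (.of_forall fun x ↦ aestronglyMeasurable_rpow_mul_cexp a x)
    (integrableOn_rpow_mul_cexp ha hs) ?_ ?_
    (integrableOn_rpow_mul_rexp (by linarith) (half_pos hs)) ?_).2.differentiableAt
  · apply Measurable.aestronglyMeasurable
    fun_prop
  · filter_upwards [ae_restrict_mem measurableSet_Ioi] with t ht x hx
    have ht : 0 < t := ht
    have hx : s.re / 2 < x.re := hx
    rw [← mul_assoc, norm_mul, norm_rpow_mul_cexp a x ht, norm_neg,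
      Complex.norm_of_nonneg ht.le, Real.rpow_add_one ht.ne', mul_right_comm]
    gcongr
  · refine .of_forall fun t x _ ↦ HasDerivAt.const_mul _ (HasDerivAt.cexp ?_)
    simpa using ((hasDerivAt_id x).mul_const (t : ℂ)).fun_neg

/-- The Gamma integral `∫ t^{a-1} e^{-st} dt = Γ(a) s^{-a}` at a complex rate `s`. -/
lemma integral_rpow_mul_cexp {a : ℝ} {s : ℂ} (ha : 0 < a) (hs : 0 < s.re) :
    ∫ t in Set.Ioi (0 : ℝ), ((t ^ (a - 1) : ℝ) : ℂ) * Complex.exp (-(s * t))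
      = (Real.Gamma a : ℂ) * s ^ (-(a : ℂ)) := by
  have hopen : IsOpen {x : ℂ | 0 < x.re} := isOpen_lt continuous_const Complex.continuous_re
  have hf : AnalyticOnNhd ℂ (fun s : ℂ ↦ ∫ t in Set.Ioi (0 : ℝ),
      ((t ^ (a - 1) : ℝ) : ℂ) * Complex.exp (-(s * t))) {x : ℂ | 0 < x.re} :=
    DifferentiableOn.analyticOnNhd (fun x hx ↦ (differentiableAt_integral_rpow_mul_cexp
      (by linarith) hx).differentiableWithinAt) hopen
  have hg : AnalyticOnNhd ℂ (fun s : ℂ ↦ (Real.Gamma a : ℂ) * s ^ (-(a : ℂ)))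
      {x : ℂ | 0 < x.re} :=
    DifferentiableOn.analyticOnNhd (fun x hx ↦ ((differentiableAt_id.cpow_const
      (Or.inl hx)).const_mul _).differentiableWithinAt) hopen
  have hreal : ∀ r : ℝ, 0 < r →
      ∫ t in Set.Ioi (0 : ℝ), ((t ^ (a - 1) : ℝ) : ℂ) * Complex.exp (-((r : ℂ) * t))
        = (Real.Gamma a : ℂ) * (r : ℂ) ^ (-(a : ℂ)) := by
    intro r hr
    have h := congrArg (fun x : ℝ ↦ (x : ℂ)) (Real.integral_rpow_mul_exp_neg_mul_Ioi ha hr)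
    simp only [one_div, Real.inv_rpow hr.le, ← Real.rpow_neg hr.le] at h
    rw [← integral_complex_ofReal] at h
    rw [mul_comm]
    simpa [Complex.ofReal_cpow hr.le] using h
  refine hf.eqOn_of_preconnected_of_frequently_eq hg (convex_halfSpace_re_gt 0).isPreconnected
    (z₀ := 1) (by simp) ?_ hs
  -- The points `1 + ε` with `ε ↓ 0` real accumulate at `1`.
  have ht : Filter.Tendsto (fun x : ℝ ↦ (x : ℂ)) (nhdsWithin 1 (Set.Ioi 1))
      (nhdsWithin 1 {1}ᶜ) := by
    refine tendsto_nhdsWithin_iff.2 ⟨?_, ?_⟩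
    · exact (Complex.continuous_ofReal.tendsto' 1 1 (by simp)).mono_left nhdsWithin_le_nhds
    · filter_upwards [self_mem_nhdsWithin] with x hx
      have hx : 1 < x := hx
      simpa using hx.ne'
  refine ht.frequently (Filter.Eventually.frequently ?_)
  filter_upwards [self_mem_nhdsWithin] with x hx
  exact hreal x (one_pos.trans hx)

/-- The singularity at `0` is controlled by `‖e^{-sy} - 1‖ ≤ 2‖s‖y`, the tail by
`‖e^{-sy} - 1‖ ≤ 2`. -/
lemma integrableOn_cexp_sub_one_mul_rpow {α : ℝ} (hα0 : 0 < α) (hα1 : α < 1) {s : ℂ}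
    (hs : 0 < s.re) :
    IntegrableOn (fun y : ℝ ↦ (Complex.exp (-(s * y)) - 1) * ((y ^ (-α - 1) : ℝ) : ℂ))
      (Set.Ioi 0) := by
  have hre : ∀ y : ℝ, 0 < y → 0 ≤ (s * y).re := fun y hy ↦ by
    simp only [Complex.re_mul_ofReal]; positivity
  have hmeas : Measurable
      (fun y : ℝ ↦ (Complex.exp (-(s * y)) - 1) * ((y ^ (-α - 1) : ℝ) : ℂ)) := by fun_prop
  rw [← Set.Ioc_union_Ioi_eq_Ioi zero_le_one]
  refine IntegrableOn.union ?_ ?_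
  · have hb : IntegrableOn (fun y : ℝ ↦ 2 * ‖s‖ * y ^ (-α)) (Set.Ioc 0 1) := by
      have := intervalIntegral.intervalIntegrable_rpow' (a := 0) (b := 1) (r := -α) (by linarith)
      rw [intervalIntegrable_iff_integrableOn_Ioc_of_le zero_le_one] at this
      exact this.const_mul _
    refine Integrable.mono' hb hmeas.aestronglyMeasurable ?_
    filter_upwards [ae_restrict_mem measurableSet_Ioc] with y hy
    have hy0 : 0 < y := hy.1
    have h := norm_cexp_neg_sub_one_le (hre y hy0)
    rw [norm_mul, Complex.norm_of_nonneg hy0.le] at h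
    rw [norm_mul, Complex.norm_of_nonneg (by positivity)]
    calc _ ≤ 2 * (‖s‖ * y) * y ^ (-α - 1) := by gcongr
      _ = 2 * ‖s‖ * y ^ (-α) := by
        rw [Real.rpow_sub_one hy0.ne']
        field_simp
  · have hb : IntegrableOn (fun y : ℝ ↦ 2 * y ^ (-α - 1)) (Set.Ioi 1) :=
      (integrableOn_Ioi_rpow_of_lt (by linarith) one_pos).const_mul 2
    refine Integrable.mono' hb hmeas.aestronglyMeasurable ?_
    filter_upwards [ae_restrict_mem measurableSet_Ioi] with y hy
    have hy0 : 0 < y := one_pos.trans hy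
    rw [norm_mul, Complex.norm_of_nonneg (by positivity)]
    gcongr
    exact norm_cexp_neg_sub_one_le_two (hre y hy0)

/-- for `0 < α < 1` and `s ∈ ℂ` with `Re s > 0`,
`∫₀^∞ (e^{−sy} − 1) y^{−1−α} dy = Γ(−α) s^α`, with the principal-branch power `s^α`
and `Γ(−α) = −Γ(1−α)/α` (Mathlib's `Real.Gamma` at `−α`). -/
theorem stmt10 (α : ℝ) (hα0 : 0 < α) (hα1 : α < 1) (s : ℂ) (hs : 0 < s.re) :
    ∫ y in Set.Ioi (0 : ℝ), (Complex.exp (-(s * (y : ℂ))) - 1) / ((y ^ (1 + α) : ℝ) : ℂ)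
      = (Real.Gamma (-α) : ℂ) * s ^ (α : ℂ) := by
  have hs0 : s ≠ 0 := by rintro rfl; simp at hs
  have hαC : (α : ℂ) ≠ 0 := by exact_mod_cast hα0.ne'
  have hre : ∀ y : ℝ, 0 < y → 0 ≤ (s * y).re := fun y hy ↦ by
    simp only [Complex.re_mul_ofReal]; positivity
  let u : ℝ → ℂ := fun y ↦ Complex.exp (-(s * y)) - 1
  let u' : ℝ → ℂ := fun y ↦ Complex.exp (-(s * y)) * (-s)
  let v : ℝ → ℂ := fun y ↦ ((-α⁻¹ * y ^ (-α) : ℝ) : ℂ)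
  let v' : ℝ → ℂ := fun y ↦ ((y ^ (-α - 1) : ℝ) : ℂ)
  have hu : ∀ y ∈ Set.Ioi (0 : ℝ), HasDerivAt u (u' y) y := fun y _ ↦ by
    refine (HasDerivAt.cexp ?_).sub_const 1
    simpa using ((hasDerivAt_id y).ofReal_comp.const_mul s).fun_neg
  have hv : ∀ y ∈ Set.Ioi (0 : ℝ), HasDerivAt v (v' y) y := fun y hy ↦ by
    refine HasDerivAt.ofReal_comp ?_
    convert! (Real.hasDerivAt_rpow_const (p := -α) (Or.inl (ne_of_gt hy))).const_mul (-α⁻¹) using 1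
    field_simp
  have hu'v_eq : u' * v =
      fun y : ℝ ↦ (s / α) * (((y ^ ((1 - α) - 1) : ℝ) : ℂ) * Complex.exp (-(s * y))) := by
    funext y
    simp only [u', v, Pi.mul_apply, Complex.ofReal_mul, Complex.ofReal_neg, Complex.ofReal_inv,
      show 1 - α - 1 = -α by ring]
    field_simp
  have hu'v : IntegrableOn (u' * v) (Set.Ioi 0) := by
    rw [hu'v_eq]
    exact (integrableOn_rpow_mul_cexp (by linarith) hs).const_mul _
  have hnorm : ∀ y : ℝ, 0 < y → ‖(u * v) y‖ = ‖u y‖ * (α⁻¹ * y ^ (-α)) := fun y hy ↦ by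
    simp only [Pi.mul_apply, norm_mul, v, Complex.norm_real, neg_mul, norm_neg]
    rw [Real.norm_of_nonneg (by positivity : 0 ≤ α⁻¹), Real.norm_of_nonneg (by positivity)]
  have h_zero : Filter.Tendsto (u * v) (nhdsWithin 0 (Set.Ioi 0)) (nhds 0) := by
    have hlim : Filter.Tendsto (fun y : ℝ ↦ 2 * ‖s‖ * α⁻¹ * y ^ (1 - α))
        (nhdsWithin 0 (Set.Ioi 0)) (nhds 0) := by
      have := ((Real.continuousAt_rpow_const 0 (1 - α) (Or.inr (by linarith))).tendsto.const_mul
        (2 * ‖s‖ * α⁻¹)).mono_left (nhdsWithin_le_nhds (s := Set.Ioi 0))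
      rwa [Real.zero_rpow (by linarith), mul_zero] at this
    refine squeeze_zero_norm' ?_ hlim
    filter_upwards [self_mem_nhdsWithin] with y hy
    have hy : 0 < y := hy
    have h := norm_cexp_neg_sub_one_le (hre y hy)
    rw [norm_mul s, Complex.norm_of_nonneg hy.le] at h
    rw [hnorm y hy]
    calc _ ≤ 2 * (‖s‖ * y) * (α⁻¹ * y ^ (-α)) := by gcongr
      _ = _ := by
        rw [show 1 - α = -α + 1 by ring, Real.rpow_add_one hy.ne']
        ring
  have h_infty : Filter.Tendsto (u * v) Filter.atTop (nhds 0) := by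
    have hlim : Filter.Tendsto (fun y : ℝ ↦ 2 * (α⁻¹ * y ^ (-α))) Filter.atTop (nhds 0) := by
      simpa using ((tendsto_rpow_neg_atTop hα0).const_mul α⁻¹).const_mul 2
    refine squeeze_zero_norm' ?_ hlim
    filter_upwards [Filter.eventually_gt_atTop 0] with y hy
    rw [hnorm y hy]
    gcongr
    exact norm_cexp_neg_sub_one_le_two (hre y hy)
  have hparts := integral_Ioi_mul_deriv_eq_deriv_mul hu hv
    (integrableOn_cexp_sub_one_mul_rpow hα0 hα1 hs) hu'v h_zero h_infty
  have hint : ∫ y in Set.Ioi (0 : ℝ), u' y * v y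
      = (s / α) * ((Real.Gamma (1 - α) : ℂ) * s ^ (-((1 - α : ℝ) : ℂ))) := by
    rw [← integral_rpow_mul_cexp (by linarith) hs, ← integral_const_mul]
    exact congrArg (fun f : ℝ → ℂ ↦ ∫ y in Set.Ioi (0 : ℝ), f y) hu'v_eq
  have hGamma : Real.Gamma (1 - α) = -α * Real.Gamma (-α) := by
    rw [← Real.Gamma_add_one (neg_ne_zero.2 hα0.ne'), neg_add_eq_sub]
  have hpow : s ^ (-((1 - α : ℝ) : ℂ)) = s ^ (α : ℂ) / s := by
    rw [show -((1 - α : ℝ) : ℂ) = α - 1 by push_cast; ring, Complex.cpow_sub _ _ hs0,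
      Complex.cpow_one]
  calc _ = ∫ y in Set.Ioi (0 : ℝ), u y * v' y := by
        refine setIntegral_congr_fun measurableSet_Ioi fun y hy ↦ ?_
        simp only [u, v']
        rw [show -α - 1 = -(1 + α) by ring, Real.rpow_neg (le_of_lt hy), Complex.ofReal_inv,
          div_eq_mul_inv]
    _ = _ := by
        rw [hparts, hint, hGamma, hpow]
        push_cast
        field_simp
        ring
end
end
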